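/- Let N ≥ 1 and let I_1 > L_1 > I_2 > L_2 > … > I_N > L_N > 0 be real numbers. For n = 1, …, 2N set j_{2n} := Σ_{j=1}^N 2^{−n} I_j^n (1 − L_j/I_j) ∏_{k≠j} (L_k − I_j)/(I_k − I_j). Then the infimum of M(c) over all c ∈ h^{1/2} satisfying J_{2n}(c) = j_{2n} for n = 1, …, 2N is attained, equals Σ_{m=1}^N L_m/2, and the set of minimizers is exactly the set of c ∈ h^{1/2} such that Γ_c has rank N with positive singular values exactly √(I_1/2), …, √(I_N/2), each simple, and Γ̃_c has rank N with positive singular values exactly √(L_1/2), …, √(L_N/2), each simple. -/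

import Mathlib

open scoped InnerProductSpace ComplexConjugate ENNReal

noncomputable section

/-- The Hilbert space `ℓ²(ℕ, ℂ)`. -/
abbrev L2 : Type := lp (fun _ : ℕ => ℂ) 2

/-- Membership in the space `h^{1/2}`: `c ∈ ℓ²` and `Σ n |c_n|² < ∞`. -/
def InH12 (c : ℕ → ℂ) : Prop :=
  Memℓp c 2 ∧ Summable (fun n : ℕ => (n : ℝ) * ‖c n‖ ^ 2)

/-- `Γ` is the Hankel operator of symbol `c`: `(Γ x)_n = Σ_p c_{n+p} x_p`. -/
def IsHankelOp (c : ℕ → ℂ) (Γ : L2 →L[ℂ] L2) : Prop :=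
  ∀ x : L2, ∀ n : ℕ, (Γ x : ℕ → ℂ) n = ∑' p : ℕ, c (n + p) * (x : ℕ → ℂ) p

/-- The shifted sequence `c̃ : n ↦ c_{n+1}`. -/
def shiftSeq (c : ℕ → ℂ) : ℕ → ℂ := fun n => c (n + 1)

/-- The operator `Γ Γ*`. -/
def opT (Γ : L2 →L[ℂ] L2) : L2 →L[ℂ] L2 :=
  Γ ∘L ContinuousLinearMap.adjoint Γ

/-- `e₀ = (1,0,0,…) ∈ ℓ²`. -/
def e0 : L2 := lp.single 2 0 1

/-- Generic min–max value `a_j` (for `j ≥ 1`) of a bounded operator `T` on a Hilbert space: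
the infimum over subspaces `F` of dimension at most `j-1` of the supremum of `Re ⟨T h, h⟩`
over unit vectors `h` orthogonal to `F`. -/
def minmaxVal {H : Type*} [NormedAddCommGroup H] [InnerProductSpace ℂ H]
    (T : H →L[ℂ] H) (j : ℕ) : ℝ :=
  ⨅ F : {F : Submodule ℂ H // Module.finrank ℂ F ≤ j - 1},
    ⨆ h : {h : H // ‖h‖ = 1 ∧ ∀ y ∈ F.1, ⟪y, h⟫_ℂ = 0},
      (⟪T h.1, h.1⟫_ℂ).re

/-- `λ_j(Γ)²` (for `j ≥ 1`): the `j`-th min–max value of `Γ Γ*`. -/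
def svalSq (Γ : L2 →L[ℂ] L2) (j : ℕ) : ℝ := minmaxVal (opT Γ) j

lemma summable_sq_of_memℓp {f : ℕ → ℂ} (hf : Memℓp f 2) :
    Summable fun n : ℕ => ‖f n‖ ^ 2 := by
  have h := hf.summable (p := 2) (by norm_num)
  have h2 : ((2 : ℝ≥0∞).toReal) = ((2 : ℕ) : ℝ) := by norm_num
  rw [h2] at h
  simpa [Real.rpow_natCast] using h

/-- The weighted sequence `n ↦ √(1+n) · c_n`, whose `ℓ²` norm is the `h^{1/2}` norm of `c`. -/
def wSeq (c : ℕ → ℂ) : ℕ → ℂ := fun n => (Real.sqrt (1 + (n : ℝ)) : ℂ) * c n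

lemma memℓp_wSeq {c : ℕ → ℂ} (hc : InH12 c) : Memℓp (wSeq c) 2 := by
  apply memℓp_gen
  have h2 : ((2 : ℝ≥0∞).toReal) = ((2 : ℕ) : ℝ) := by norm_num
  rw [h2]
  have hs : Summable fun n : ℕ => (1 + (n : ℝ)) * ‖c n‖ ^ 2 := by
    have := (summable_sq_of_memℓp hc.1).add hc.2
    convert this using 2 with n
    ring
  have key : ∀ n : ℕ, ‖wSeq c n‖ ^ ((2 : ℕ) : ℝ) = (1 + (n : ℝ)) * ‖c n‖ ^ 2 := by
    intro n
    rw [Real.rpow_natCast]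
    have h1 : (0 : ℝ) ≤ 1 + (n : ℝ) := by positivity
    simp only [wSeq, norm_mul, Complex.norm_real, Real.norm_eq_abs,
      abs_of_nonneg (Real.sqrt_nonneg _)]
    rw [mul_pow, Real.sq_sqrt h1]
  exact (summable_congr fun n => key n).mpr hs

/-- The space `h^{1/2}` as a type. -/
def H12 : Type := {c : ℕ → ℂ // InH12 c}

/-- The isometric embedding of `h^{1/2}` into `ℓ²` given by `c ↦ (√(1+n) c_n)_n`;
the `h^{1/2}` norm of `c` is the `ℓ²` norm of its image. -/
def H12.toL2 (c : H12) : L2 := ⟨wSeq c.1, memℓp_wSeq c.2⟩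

lemma H12.toL2_injective : Function.Injective H12.toL2 := by
  intro c d h
  apply Subtype.ext
  funext n
  have h' : wSeq c.1 n = wSeq d.1 n := congrFun (congrArg Subtype.val h) n
  have hs : (Real.sqrt (1 + (n : ℝ)) : ℂ) ≠ 0 := by
    simp only [ne_eq, Complex.ofReal_eq_zero]
    positivity
  exact mul_left_cancel₀ hs h'

/-- The metric (hence the topology) on `h^{1/2}` induced by the `h^{1/2}` norm
`(Σ (1+n)|c_n|²)^{1/2}`, obtained from the isometric embedding into `ℓ²`. -/
instance : MetricSpace H12 := MetricSpace.induced H12.toL2 H12.toL2_injective inferInstance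

/-- `Γ` has rank `N` and its positive singular values are exactly `λ_1, …, λ_N`, each simple. -/
def HasSimpleSVals (Γ : L2 →L[ℂ] L2) (N : ℕ) (lam : Fin N → ℝ) : Prop :=
  LinearMap.rank Γ.toLinearMap = N ∧
  {z : ℂ | z ≠ 0 ∧ Module.End.HasEigenvalue (opT Γ).toLinearMap z}
    = Set.range (fun j : Fin N => ((lam j : ℂ)) ^ 2) ∧
  ∀ j : Fin N,
    Module.finrank ℂ (Module.End.eigenspace (opT Γ).toLinearMap ((lam j : ℂ) ^ 2)) = 1

/-! ### Part A: algebra of the interlacing sequences -/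

section PartA
open Polynomial

/-- Algebraic facts about the spectral data. -/
structure SpecData (N : ℕ) (i l w : Fin N → ℝ) : Prop where
  i_inj : Function.Injective i
  l_inj : Function.Injective l
  i_pos : ∀ j, 0 < i j
  l_pos : ∀ j, 0 < l j
  w_pos : ∀ j, 0 < w j
  i_ne_l : ∀ j k, i j ≠ l k
  w0_pos : 0 < 1 - ∑ j, w j
  cauchy : ∀ k, ∑ j, i j * w j / (i j - l k) = 1
  trace : ∑ j, i j - ∑ j, w j * i j = ∑ j, l j

lemma degree_lt_of_sum {N : ℕ} (i d : Fin N → ℝ) :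
    (∑ j, C (d j) * ∏ k ∈ Finset.univ.erase j, (X - C (i k))).degree < N := by
  rw [← Polynomial.mem_degreeLT]
  apply Submodule.sum_mem
  intro j _
  rw [Polynomial.mem_degreeLT]
  rw [← smul_eq_C_mul]
  refine lt_of_le_of_lt (degree_smul_le _ _) ?_
  rw [degree_prod]
  have : 0 < N := j.pos
  simp only [degree_X_sub_C, Finset.sum_const, Finset.card_erase_of_mem (Finset.mem_univ j),
    Finset.card_univ, Fintype.card_fin]
  rw [nsmul_one]
  exact_mod_cast (by omega : N - 1 < N)

lemma pf_poly {N : ℕ} (i l w : Fin N → ℝ) (hi : Function.Injective i)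
    (hw : ∀ j, i j * w j * ∏ k ∈ Finset.univ.erase j, (i j - i k) = ∏ k, (i j - l k)) :
    ∏ k, (X - C (i k)) + ∑ j, C (i j * w j) * ∏ k ∈ Finset.univ.erase j, (X - C (i k))
      = ∏ k, (X - C (l k)) := by
  classical
  have hm1 : (∏ k, (X - C (i k))).Monic := monic_prod_X_sub_C i Finset.univ
  have hm2 : (∏ k, (X - C (l k))).Monic := monic_prod_X_sub_C l Finset.univ
  have hd1 : (∏ k, (X - C (i k))).degree = (N : WithBot ℕ) := by
    rw [degree_prod]; simp
  have hd2 : (∏ k, (X - C (l k))).degree = (N : WithBot ℕ) := by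
    rw [degree_prod]; simp
  have hc : (Finset.univ.image i).card = N := by
    rw [Finset.card_image_of_injective _ hi]; simp
  have key : ∑ j, C (i j * w j) * ∏ k ∈ Finset.univ.erase j, (X - C (i k))
      = ∏ k, (X - C (l k)) - ∏ k, (X - C (i k)) := by
    apply Polynomial.eq_of_degrees_lt_of_eval_finset_eq (Finset.univ.image i)
    · rw [hc]; exact degree_lt_of_sum i fun j => i j * w j
    · rw [hc, ← hd2]
      refine degree_sub_lt_left (hd2.trans hd1.symm) hm2.ne_zero ?_
      rw [hm1.leadingCoeff, hm2.leadingCoeff]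
    · intro x hx
      obtain ⟨j, -, rfl⟩ := Finset.mem_image.1 hx
      simp only [eval_finsetSum, eval_mul, eval_C, eval_prod, eval_sub, eval_X]
      have z : ∏ k, (i j - i k) = 0 := Finset.prod_eq_zero (Finset.mem_univ j) (sub_self (i j))
      rw [Finset.sum_eq_single j, hw j, z, sub_zero]
      · intro b _ hb
        rw [Finset.prod_eq_zero (i := j) (by simp [Ne.symm hb]) (sub_self _), mul_zero]
      · simp
  rw [key]; ring

/-- Invertibility of the Cauchy matrix. -/
lemma cauchy_inj {N : ℕ} (i l d : Fin N → ℝ) (hi : Function.Injective i)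
    (hl : Function.Injective l) (hil : ∀ j k, i j ≠ l k)
    (h : ∀ k, ∑ j, d j / (i j - l k) = 0) : d = 0 := by
  classical
  have hc : (Finset.univ.image l).card = N := by
    rw [Finset.card_image_of_injective _ hl]; simp
  have key : ∑ j, C (d j) * ∏ k ∈ Finset.univ.erase j, (X - C (i k)) = 0 := by
    apply Polynomial.eq_of_degrees_lt_of_eval_finset_eq (Finset.univ.image l)
    · rw [hc]; exact degree_lt_of_sum i d
    · rw [degree_zero, hc]; exact WithBot.bot_lt_coe _
    · intro x hx
      obtain ⟨k, -, rfl⟩ := Finset.mem_image.1 hx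
      simp only [eval_finsetSum, eval_mul, eval_C, eval_prod, eval_sub, eval_X, eval_zero]
      have : ∑ j, d j * ∏ m ∈ Finset.univ.erase j, (l k - i m)
          = (∑ j, d j / (i j - l k)) * (-∏ m, (l k - i m)) := by
        rw [Finset.sum_mul]
        refine Finset.sum_congr rfl fun j _ => ?_
        rw [← Finset.mul_prod_erase _ _ (Finset.mem_univ j)]
        have := sub_ne_zero.2 (hil j k)
        field_simp
        ring
      rw [this, h k, zero_mul]
  funext j
  have := congrArg (eval (i j)) key
  simp only [eval_finsetSum, eval_mul, eval_C, eval_prod, eval_sub, eval_X, eval_zero] at this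
  rw [Finset.sum_eq_single j] at this
  · rcases mul_eq_zero.1 this with h | h
    · exact h
    · obtain ⟨k, hk, hk'⟩ := Finset.prod_eq_zero_iff.1 h
      exact absurd (hi (sub_eq_zero.1 hk')).symm (Finset.ne_of_mem_erase hk)
  · intro b _ hb
    rw [Finset.prod_eq_zero (i := j) (by simp [Ne.symm hb]) (sub_self _), mul_zero]
  · simp

lemma specData_mk {N : ℕ} (hN : 1 ≤ N) (i l w : Fin N → ℝ) (hi : Function.Injective i)
    (hl : Function.Injective l) (hipos : ∀ j, 0 < i j) (hlpos : ∀ j, 0 < l j)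
    (hwpos : ∀ j, 0 < w j) (hil : ∀ j k, i j ≠ l k)
    (hw : ∀ j, i j * w j * ∏ k ∈ Finset.univ.erase j, (i j - i k) = ∏ k, (i j - l k)) :
    SpecData N i l w := by
  classical
  have pf := pf_poly i l w hi hw
  refine ⟨hi, hl, hipos, hlpos, hwpos, hil, ?_, ?_, ?_⟩
  · have h0 := congrArg (eval 0) pf
    simp only [eval_finsetSum, eval_add, eval_mul, eval_C, eval_prod, eval_sub, eval_X,
      zero_sub] at h0
    have e1 : ∀ f : Fin N → ℝ, ∏ k, (- f k) = (-1) ^ N * ∏ k, f k := by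
      intro f
      rw [Finset.prod_neg]; simp
    have e2 : ∑ j, i j * w j * ∏ k ∈ Finset.univ.erase j, (- i k)
        = -((∑ j, w j) * ((-1) ^ N * ∏ k, i k)) := by
      rw [Finset.sum_mul, ← Finset.sum_neg_distrib]
      refine Finset.sum_congr rfl fun j _ => ?_
      rw [← e1, ← Finset.mul_prod_erase _ _ (Finset.mem_univ j)]
      ring
    rw [e1, e1, e2] at h0
    have e3 : ((-1 : ℝ) ^ N) ≠ 0 := by positivity
    have e4 : (∏ k, i k) * (1 - ∑ j, w j) = ∏ k, l k := by
      apply mul_left_cancel₀ e3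
      linear_combination h0
    have p1 : 0 < ∏ k, i k := Finset.prod_pos fun k _ => hipos k
    have p2 : 0 < ∏ k, l k := Finset.prod_pos fun k _ => hlpos k
    rw [← e4] at p2
    exact (pos_iff_pos_of_mul_pos p2).1 p1
  · intro k
    have h0 := congrArg (eval (l k)) pf
    simp only [eval_finsetSum, eval_add, eval_mul, eval_C, eval_prod, eval_sub, eval_X] at h0
    have z : ∏ m, (l k - l m) = 0 := Finset.prod_eq_zero (Finset.mem_univ k) (sub_self (l k))
    rw [z] at h0
    have : ∑ j, i j * w j * ∏ m ∈ Finset.univ.erase j, (l k - i m)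
        = (∑ j, i j * w j / (i j - l k)) * (-∏ m, (l k - i m)) := by
      rw [Finset.sum_mul]
      refine Finset.sum_congr rfl fun j _ => ?_
      rw [← Finset.mul_prod_erase _ _ (Finset.mem_univ j)]
      have := sub_ne_zero.2 (hil j k)
      field_simp
      ring
    rw [this] at h0
    have hne : ∏ m, (l k - i m) ≠ 0 :=
      Finset.prod_ne_zero_iff.2 fun m _ => sub_ne_zero.2 (hil m k).symm
    apply mul_right_cancel₀ hne
    linear_combination -h0
  · have h0 := congrArg (fun p => coeff p (N - 1)) pf
    have hcu : (Finset.univ : Finset (Fin N)).card = N := by simp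
    have hc1 := prod_X_sub_C_coeff_card_pred (Finset.univ : Finset (Fin N)) i (by rw [hcu]; omega)
    have hc2 := prod_X_sub_C_coeff_card_pred (Finset.univ : Finset (Fin N)) l (by rw [hcu]; omega)
    rw [hcu] at hc1 hc2
    simp only [coeff_add, finsetSum_coeff, coeff_C_mul] at h0
    rw [hc1, hc2] at h0
    have e : ∀ j, (∏ k ∈ Finset.univ.erase j, (X - C (i k))).coeff (N - 1) = 1 := by
      intro j
      have hm : (∏ k ∈ Finset.univ.erase j, (X - C (i k))).Monic := monic_prod_X_sub_C i _
      have hd : (∏ k ∈ Finset.univ.erase j, (X - C (i k))).natDegree = N - 1 := by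
        rw [natDegree_prod _ _ fun k _ => X_sub_C_ne_zero _]
        simp
      rw [← hd]; exact hm
    simp only [e, mul_one] at h0
    simp only [mul_comm (w _)]
    linarith

lemma specData_of {N : ℕ} (hN : 1 ≤ N) (I L : Fin N → ℝ)
    (h1 : ∀ j : Fin N, L j < I j)
    (h2 : ∀ j k : Fin N, (j : ℕ) + 1 = (k : ℕ) → I k < L j)
    (h3 : ∀ j : Fin N, 0 < L j) :
    SpecData N (fun j => I j / 2) (fun j => L j / 2)
      (fun j => (1 - L j / I j) * ∏ k ∈ Finset.univ.erase j, (L k - I j) / (I k - I j)) := by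
  have hlt : ∀ n : ℕ, ∀ j k : Fin N, (j : ℕ) + (n + 1) = k → I k < L j := by
    intro n
    induction n with
    | zero => intro j k h; exact h2 j k (by simpa using h)
    | succ n ih =>
      intro j k h
      have hk := k.2
      have a := ih j ⟨j + (n + 1), by omega⟩ rfl
      have b := h2 ⟨j + (n + 1), by omega⟩ k (by simp; omega)
      exact b.trans ((h1 _).trans a)
  have hIL : ∀ j k : Fin N, j < k → I k < L j := by
    intro j k h
    have h' : (j : ℕ) < k := h
    exact hlt (k - j - 1) j k (by omega)
  have hII : ∀ j k : Fin N, j < k → I k < I j := fun j k h => (hIL j k h).trans (h1 j)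
  have hLL : ∀ j k : Fin N, j < k → L k < L j := fun j k h => (h1 k).trans (hIL j k h)
  have hLI : ∀ j k : Fin N, j < k → L k < I j := fun j k h => (hLL j k h).trans (h1 j)
  have hIpos : ∀ j, 0 < I j := fun j => (h3 j).trans (h1 j)
  have hIinj : ∀ j k, I j = I k → j = k := by
    intro j k h
    rcases lt_trichotomy j k with hh | hh | hh
    · exact absurd h (hII _ _ hh).ne'
    · exact hh
    · exact absurd h (hII _ _ hh).ne
  have hLinj : ∀ j k, L j = L k → j = k := by
    intro j k h
    rcases lt_trichotomy j k with hh | hh | hh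
    · exact absurd h (hLL _ _ hh).ne'
    · exact hh
    · exact absurd h (hLL _ _ hh).ne
  refine specData_mk hN _ _ _ ?_ ?_ ?_ ?_ ?_ ?_ ?_
  · intro j k h
    exact hIinj j k (by simpa using h)
  · intro j k h
    exact hLinj j k (by simpa using h)
  · intro j; have := hIpos j; positivity
  · intro j; have := h3 j; positivity
  · intro j
    refine mul_pos ?_ (Finset.prod_pos ?_)
    · rw [sub_pos, div_lt_one (hIpos j)]; exact h1 j
    · intro k hk
      rcases lt_or_gt_of_ne (Finset.ne_of_mem_erase hk) with h | h
      · exact div_pos (sub_pos.2 (hIL _ _ h)) (sub_pos.2 (hII _ _ h))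
      · exact div_pos_of_neg_of_neg (sub_neg.2 (hLI _ _ h)) (sub_neg.2 (hII _ _ h))
  · intro j k h
    have h : I j = L k := by simpa using h
    rcases lt_trichotomy j k with hh | hh | hh
    · exact absurd h (hLI _ _ hh).ne'
    · subst hh; exact absurd h (h1 _).ne'
    · exact absurd h (hIL _ _ hh).ne
  · intro j
    rw [← Finset.mul_prod_erase _ _ (Finset.mem_univ j), Finset.prod_div_distrib]
    have e1 : ∏ k ∈ Finset.univ.erase j, (I j / 2 - I k / 2)
        = (∏ k ∈ Finset.univ.erase j, (I k - I j)) * ∏ k ∈ Finset.univ.erase j, (-1 / 2 : ℝ) := by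
      rw [← Finset.prod_mul_distrib]
      exact Finset.prod_congr rfl fun k _ => by ring
    have e2 : ∏ k ∈ Finset.univ.erase j, (I j / 2 - L k / 2)
        = (∏ k ∈ Finset.univ.erase j, (L k - I j)) * ∏ k ∈ Finset.univ.erase j, (-1 / 2 : ℝ) := by
      rw [← Finset.prod_mul_distrib]
      exact Finset.prod_congr rfl fun k _ => by ring
    have e3 : ∏ k ∈ Finset.univ.erase j, (I k - I j) ≠ 0 :=
      Finset.prod_ne_zero_iff.2 fun k hk =>
        sub_ne_zero.2 fun h => Finset.ne_of_mem_erase hk (hIinj _ _ h)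
    rw [e1, e2]
    have := (hIpos j).ne'
    field_simp

end PartA


/-! ### Part B: Hankel operators -/

section PartB

/-- The standard basis of `ℓ²`. -/
def eb (n : ℕ) : L2 := lp.single 2 n 1

lemma e0_eq : e0 = eb 0 := rfl

lemma inner_eb (n : ℕ) (x : L2) : ⟪eb n, x⟫_ℂ = (x : ℕ → ℂ) n := by
  rw [eb, lp.inner_single_left]; simp

lemma eb_apply (n m : ℕ) : (eb n : ℕ → ℂ) m = if m = n then 1 else 0 := by
  simp [eb, lp.single_apply, Pi.single_apply]

lemma hasSum_norm_sq (x : L2) : HasSum (fun n => ‖(x : ℕ → ℂ) n‖ ^ 2) (‖x‖ ^ 2) := by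
  have h := lp.hasSum_inner (𝕜 := ℂ) x x
  have h2 := Complex.hasSum_re h
  convert h2 using 1
  · funext n
    rw [inner_self_eq_norm_sq_to_K]; norm_cast
  · rw [inner_self_eq_norm_sq_to_K]; norm_cast

lemma star_inner_star (x y : L2) : ⟪star x, star y⟫_ℂ = ⟪y, x⟫_ℂ := by
  rw [lp.inner_eq_tsum, lp.inner_eq_tsum]
  refine tsum_congr fun n => ?_
  simp [mul_comm]

lemma hankel_eb {c : ℕ → ℂ} {Γ : L2 →L[ℂ] L2} (h : IsHankelOp c Γ) (p n : ℕ) :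
    (Γ (eb p) : ℕ → ℂ) n = c (n + p) := by
  rw [h, tsum_eq_single p]
  · simp [eb_apply]
  · intro b hb; simp [eb_apply, hb]

lemma hankel_adj_apply {c : ℕ → ℂ} {Γ : L2 →L[ℂ] L2} (h : IsHankelOp c Γ) (x : L2) (n : ℕ) :
    (ContinuousLinearMap.adjoint Γ x : ℕ → ℂ) n = ∑' m, conj (c (n + m)) * (x : ℕ → ℂ) m := by
  rw [← inner_eb, ContinuousLinearMap.adjoint_inner_right, lp.inner_eq_tsum]
  refine tsum_congr fun m => ?_
  rw [hankel_eb h, add_comm]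
  simp [mul_comm]

lemma hankel_adj {c : ℕ → ℂ} {Γ : L2 →L[ℂ] L2} (h : IsHankelOp c Γ) (x : L2) :
    ContinuousLinearMap.adjoint Γ x = star (Γ (star x)) := by
  apply lp.ext
  funext n
  rw [hankel_adj_apply h, lp.coeFn_star, Pi.star_apply, h, Complex.star_def, Complex.conj_tsum]
  refine tsum_congr fun m => ?_
  simp

lemma star_eb (n : ℕ) : star (eb n) = eb n := by
  apply lp.ext
  funext m
  rw [lp.coeFn_star, Pi.star_apply, eb_apply]
  split_ifs <;> simp

lemma opT_apply (Γ : L2 →L[ℂ] L2) (x : L2) :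
    opT Γ x = Γ (ContinuousLinearMap.adjoint Γ x) := rfl

lemma opT_symm (Γ : L2 →L[ℂ] L2) (x y : L2) : ⟪opT Γ x, y⟫_ℂ = ⟪x, opT Γ y⟫_ℂ := by
  rw [opT_apply, opT_apply, ← ContinuousLinearMap.adjoint_inner_right,
    ContinuousLinearMap.adjoint_inner_left]

lemma opT_inner_self (Γ : L2 →L[ℂ] L2) (x : L2) :
    ⟪x, opT Γ x⟫_ℂ = ((‖ContinuousLinearMap.adjoint Γ x‖ ^ 2 : ℝ) : ℂ) := by
  rw [opT_apply, ← ContinuousLinearMap.adjoint_inner_left, inner_self_eq_norm_sq_to_K]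
  norm_cast

lemma opT_eq_zero (Γ : L2 →L[ℂ] L2) (x : L2) (h : opT Γ x = 0) :
    ContinuousLinearMap.adjoint Γ x = 0 := by
  have := opT_inner_self Γ x
  rw [h, inner_zero_right] at this
  have h2 : ‖ContinuousLinearMap.adjoint Γ x‖ ^ 2 = 0 := by exact_mod_cast this.symm
  simpa using h2

lemma opT_pow_symm (Γ : L2 →L[ℂ] L2) (n : ℕ) (x y : L2) :
    ⟪(opT Γ ^ n) x, y⟫_ℂ = ⟪x, (opT Γ ^ n) y⟫_ℂ := by
  induction n generalizing x y with
  | zero => simp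
  | succ n ih =>
    have e1 : (opT Γ ^ (n + 1)) x = (opT Γ ^ n) (opT Γ x) := by rw [pow_succ]; rfl
    have e2 : (opT Γ ^ (n + 1)) y = opT Γ ((opT Γ ^ n) y) := by rw [pow_succ']; rfl
    rw [e1, e2, ih, opT_symm]

lemma hankel_symm {c : ℕ → ℂ} {Γ : L2 →L[ℂ] L2} (h : IsHankelOp c Γ) (x y : L2) :
    ⟪x, Γ (star y)⟫_ℂ = ⟪y, Γ (star x)⟫_ℂ := by
  rw [← ContinuousLinearMap.adjoint_inner_left, hankel_adj h, star_inner_star]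

lemma hankel_opT {c : ℕ → ℂ} {Γ : L2 →L[ℂ] L2} (h : IsHankelOp c Γ) (x : L2) :
    opT Γ x = Γ (star (Γ (star x))) := by
  rw [opT_apply, hankel_adj h]

lemma hankel_opT_comm {c : ℕ → ℂ} {Γ : L2 →L[ℂ] L2} (h : IsHankelOp c Γ) (n : ℕ) (x : L2) :
    (opT Γ ^ n) (Γ (star x)) = Γ (star ((opT Γ ^ n) x)) := by
  induction n with
  | zero => simp
  | succ n ih =>
    have e2 : ∀ y, (opT Γ ^ (n + 1)) y = opT Γ ((opT Γ ^ n) y) := by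
      intro y; rw [pow_succ']; rfl
    rw [e2, e2, ih, hankel_opT h, hankel_opT h]

lemma hankel_moment {c : ℕ → ℂ} {Γ : L2 →L[ℂ] L2} (h : IsHankelOp c Γ) (n : ℕ) :
    ⟪e0, (opT Γ ^ (n + 1)) e0⟫_ℂ = ⟪Γ e0, (opT Γ ^ n) (Γ e0)⟫_ℂ := by
  have e2 : (opT Γ ^ (n + 1)) e0 = opT Γ ((opT Γ ^ n) e0) := by rw [pow_succ']; rfl
  rw [e2, hankel_opT h, hankel_symm h, ← hankel_opT_comm h, opT_pow_symm, e0_eq, star_eb]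

lemma hankel_split {c : ℕ → ℂ} {Γ Γt : L2 →L[ℂ] L2} (h : IsHankelOp c Γ)
    (ht : IsHankelOp (shiftSeq c) Γt) (x : L2) (n : ℕ) :
    (ContinuousLinearMap.adjoint Γt x : ℕ → ℂ) n
      = (ContinuousLinearMap.adjoint Γ x : ℕ → ℂ) (n + 1) := by
  rw [hankel_adj_apply h, hankel_adj_apply ht]
  refine tsum_congr fun m => ?_
  rw [shiftSeq]; congr 3; ring

lemma hankel_adj_zero {c : ℕ → ℂ} {Γ Γt : L2 →L[ℂ] L2} (h : IsHankelOp c Γ)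
    (ht : IsHankelOp (shiftSeq c) Γt) (x : L2) (hx : ContinuousLinearMap.adjoint Γ x = 0) :
    ContinuousLinearMap.adjoint Γt x = 0 := by
  apply lp.ext
  funext n
  rw [hankel_split h ht, hx]; simp

lemma hankel_rank_one {c : ℕ → ℂ} {Γ Γt : L2 →L[ℂ] L2} (h : IsHankelOp c Γ)
    (ht : IsHankelOp (shiftSeq c) Γt) (x : L2) :
    opT Γ x = opT Γt x + ⟪Γ e0, x⟫_ℂ • Γ e0 := by
  apply lp.ext
  funext n
  have hsum : ∀ y : L2, Summable fun p => c (n + p) * (y : ℕ → ℂ) p := by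
    intro y
    have := (lp.hasSum_inner (𝕜 := ℂ) (ContinuousLinearMap.adjoint Γ (eb n)) y).summable
    refine this.congr fun p => ?_
    rw [hankel_adj h, lp.coeFn_star, Pi.star_apply, star_eb, hankel_eb h, add_comm]
    simp [mul_comm]
  rw [lp.coeFn_add, lp.coeFn_smul, Pi.add_apply, Pi.smul_apply, opT_apply, opT_apply, h, ht,
    (hsum _).tsum_eq_zero_add, e0_eq, hankel_eb h, add_zero, ← inner_eb 0,
    ContinuousLinearMap.adjoint_inner_right, smul_eq_mul, add_comm, mul_comm (c n)]
  congr 1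
  refine tsum_congr fun m => ?_
  rw [hankel_split h ht, shiftSeq]; congr 2

lemma summable_sigma_antidiag (g : ℕ → ℝ) (hg : ∀ n, 0 ≤ g n)
    (h : Summable (fun n : ℕ => ((n : ℝ) + 1) * g n)) :
    Summable (fun s : (Σ n : ℕ, Finset.HasAntidiagonal.antidiagonal n) => g s.1) := by
  rw [summable_sigma_of_nonneg fun s => hg _]
  refine ⟨fun n => (hasSum_fintype _).summable, ?_⟩
  refine h.congr fun n => ?_
  simp

lemma hasSum_antidiag (g : ℕ → ℝ) (hg : ∀ n, 0 ≤ g n) (S : ℝ)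
    (h : HasSum (fun n : ℕ => ((n : ℝ) + 1) * g n) S) :
    HasSum (fun n => ∑' m, g (m + n)) S := by
  have hs := summable_sigma_antidiag g hg h.summable
  have h1 : HasSum (fun s : (Σ n : ℕ, Finset.HasAntidiagonal.antidiagonal n) => g s.1) S := by
    have h2 := hs.hasSum.sigma fun n => hasSum_fintype _
    simp only [Finset.sum_const, Finset.card_univ, Fintype.card_coe,
      Finset.Nat.card_antidiagonal, nsmul_eq_mul, Nat.cast_add, Nat.cast_one] at h2
    rw [h.unique h2]
    exact hs.hasSum
  have h3 : HasSum (fun p : ℕ × ℕ => g (p.2 + p.1)) S := by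
    rw [← Finset.HasAntidiagonal.sigmaAntidiagonalEquivProd.hasSum_iff]
    convert h1 using 1
    funext s
    have := Finset.HasAntidiagonal.mem_antidiagonal.1 s.2.2
    simp only [Function.comp, Finset.HasAntidiagonal.sigmaAntidiagonalEquivProd_apply]
    rw [add_comm, this]
  exact h3.prod_fiberwise fun n => (h3.summable.prod_factor n).hasSum

lemma summable_antidiag (g : ℕ → ℝ) (hg : ∀ n, 0 ≤ g n)
    (h1 : ∀ n, Summable fun m => g (m + n)) (h2 : Summable fun n => ∑' m, g (m + n)) :
    Summable (fun n : ℕ => (n : ℝ) * g n) := by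
  have h3 : Summable (fun p : ℕ × ℕ => g (p.2 + p.1)) := by
    rw [summable_prod_of_nonneg fun p => hg _]
    exact ⟨h1, h2⟩
  rw [← Finset.HasAntidiagonal.sigmaAntidiagonalEquivProd.summable_iff,
    summable_sigma_of_nonneg fun s => by simpa using hg _] at h3
  refine h3.2.of_nonneg_of_le (fun n => mul_nonneg (by positivity) (hg n)) fun n => ?_
  have e : ∀ y : Finset.HasAntidiagonal.antidiagonal n, ((fun p : ℕ × ℕ => g (p.2 + p.1)) ∘
      Finset.HasAntidiagonal.sigmaAntidiagonalEquivProd) ⟨n, y⟩ = g n := by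
    intro y
    have := Finset.HasAntidiagonal.mem_antidiagonal.1 y.2
    simp only [Function.comp, Finset.HasAntidiagonal.sigmaAntidiagonalEquivProd_apply]
    rw [add_comm, this]
  simp only [e]
  simp only [tsum_fintype, Finset.sum_const, Finset.card_univ, Fintype.card_coe,
      Finset.Nat.card_antidiagonal, nsmul_eq_mul, Nat.cast_add, Nat.cast_one]
  nlinarith [hg n]

lemma hankel_HS {c : ℕ → ℂ} {Γ : L2 →L[ℂ] L2} (h : IsHankelOp c Γ) (hc : InH12 c) :
    HasSum (fun n => ‖Γ (eb n)‖ ^ 2) (∑' n : ℕ, (n : ℝ) * ‖c n‖ ^ 2 + ‖Γ e0‖ ^ 2) := by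
  have h0 : HasSum (fun n => ‖c n‖ ^ 2) (‖Γ e0‖ ^ 2) := by
    have := hasSum_norm_sq (Γ e0)
    simpa only [e0_eq, hankel_eb h, add_zero] using this
  have h1 := hc.2.hasSum.add h0
  have h2 := hasSum_antidiag (fun n => ‖c n‖ ^ 2) (fun n => by positivity) _
    (by convert h1 using 2; ring)
  convert h2 using 2 with n
  rw [← (hasSum_norm_sq (Γ (eb n))).tsum_eq]
  simp only [hankel_eb h]

lemma norm_adj_eb {c : ℕ → ℂ} {Γ : L2 →L[ℂ] L2} (h : IsHankelOp c Γ) (n : ℕ) :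
    ‖ContinuousLinearMap.adjoint Γ (eb n)‖ = ‖Γ (eb n)‖ := by
  rw [hankel_adj h, star_eb, norm_star]

lemma hankel_bessel {c : ℕ → ℂ} {Γ : L2 →L[ℂ] L2} (h : IsHankelOp c Γ) (hc : InH12 c)
    {ι : Type*} [Fintype ι] (v : ι → L2) (hv : Orthonormal ℂ v) :
    ∑ k, ‖ContinuousLinearMap.adjoint Γ (v k)‖ ^ 2
      ≤ ∑' n : ℕ, (n : ℝ) * ‖c n‖ ^ 2 + ‖Γ e0‖ ^ 2 := by
  have h1 : HasSum (fun n => ∑ k, ‖⟪v k, Γ (eb n)⟫_ℂ‖ ^ 2)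
      (∑ k, ‖ContinuousLinearMap.adjoint Γ (v k)‖ ^ 2) := by
    apply hasSum_sum
    intro k _
    convert hasSum_norm_sq (ContinuousLinearMap.adjoint Γ (v k)) using 2 with n
    rw [← inner_eb, ContinuousLinearMap.adjoint_inner_right, norm_inner_symm]
  exact hasSum_le (fun n => hv.sum_inner_products_le _) h1 (hankel_HS h hc)

lemma hankel_trace {c : ℕ → ℂ} {Γ : L2 →L[ℂ] L2} (h : IsHankelOp c Γ) (hc : InH12 c)
    {ι : Type*} [Fintype ι] (f : ι → L2) (hf : ∀ j, ‖f j‖ = 1) (t : ι → ℝ)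
    (hT : ∀ x, opT Γ x = ∑ j, ((t j : ℂ) * ⟪f j, x⟫_ℂ) • f j) :
    ∑' n : ℕ, (n : ℝ) * ‖c n‖ ^ 2 + ‖Γ e0‖ ^ 2 = ∑ j, t j := by
  have h1 : HasSum (fun n => ∑ j, t j * ‖(f j : ℕ → ℂ) n‖ ^ 2) (∑ j, t j * ‖f j‖ ^ 2) :=
    hasSum_sum fun j _ => (hasSum_norm_sq (f j)).mul_left (t j)
  have h2 : ∑ j, t j = ∑ j, t j * ‖f j‖ ^ 2 := by simp [hf]
  rw [h2]
  refine (hankel_HS h hc).unique ?_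
  convert h1 using 2 with n
  have := opT_inner_self Γ (eb n)
  rw [norm_adj_eb h] at this
  apply Complex.ofReal_injective
  rw [← this, hT, inner_sum, Complex.ofReal_sum]
  refine Finset.sum_congr rfl fun j _ => ?_
  rw [inner_smul_right, ← inner_conj_symm (f j), inner_eb, mul_assoc, Complex.conj_mul']
  push_cast; rfl

lemma inH12_of_HS {c : ℕ → ℂ} {Γ : L2 →L[ℂ] L2} (h : IsHankelOp c Γ)
    (hs : Summable fun n => ‖Γ (eb n)‖ ^ 2) : InH12 c := by
  have e : (fun n => (Γ (eb 0) : ℕ → ℂ) n) = c := by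
    funext n; rw [hankel_eb h, add_zero]
  refine ⟨e ▸ lp.memℓp (Γ (eb 0)), ?_⟩
  refine summable_antidiag (fun n => ‖c n‖ ^ 2) (fun n => by positivity) (fun n => ?_) ?_
  · have := (hasSum_norm_sq (Γ (eb n))).summable
    simpa only [hankel_eb h] using this
  · refine hs.congr fun n => ?_
    rw [← (hasSum_norm_sq (Γ (eb n))).tsum_eq]
    simp only [hankel_eb h]

/-- left shift -/
lemma exists_shift {c : ℕ → ℂ} {Γ : L2 →L[ℂ] L2} (h : IsHankelOp c Γ) :
    ∃ Γt, IsHankelOp (shiftSeq c) Γt := by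
  have hs : ∀ x : L2, HasSum (fun n => ‖(x : ℕ → ℂ) (n + 1)‖ ^ 2)
      (‖x‖ ^ 2 - ‖(x : ℕ → ℂ) 0‖ ^ 2) := by
    intro x
    have := (hasSum_nat_add_iff' 1).2 (hasSum_norm_sq x)
    simpa using this
  have hm : ∀ x : L2, Memℓp (fun n => (x : ℕ → ℂ) (n + 1)) 2 := by
    intro x
    apply memℓp_gen
    have h2 : ((2 : ℝ≥0∞).toReal) = ((2 : ℕ) : ℝ) := by norm_num
    rw [h2]
    simpa only [Real.rpow_natCast] using (hs x).summable
  let S : L2 →ₗ[ℂ] L2 :=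
    { toFun := fun x => ⟨fun n => (x : ℕ → ℂ) (n + 1), hm x⟩
      map_add' := fun x y => by ext n; rfl
      map_smul' := fun a x => by ext n; rfl }
  have hS : ∀ x n, (S x : ℕ → ℂ) n = (x : ℕ → ℂ) (n + 1) := fun x n => rfl
  let S' : L2 →L[ℂ] L2 := S.mkContinuous 1 (by
    intro x
    rw [one_mul]
    have h1 := hasSum_norm_sq (S x)
    simp only [hS] at h1
    have := h1.unique (hs x)
    have h3 : ‖S x‖ ^ 2 ≤ ‖x‖ ^ 2 := by rw [this]; simp
    exact (sq_le_sq₀ (norm_nonneg _) (norm_nonneg _)).1 h3)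
  refine ⟨S' ∘L Γ, fun x n => ?_⟩
  change (Γ x : ℕ → ℂ) (n + 1) = _
  rw [h]
  refine tsum_congr fun p => ?_
  rw [shiftSeq]; congr 2; ring

end PartB


/-! ### Part C: the truncated moment problem -/

section PartC
open Polynomial

lemma aeval_symm (Γ : L2 →L[ℂ] L2) (P : ℝ[X]) (x y : L2) :
    ⟪aeval (opT Γ) P x, y⟫_ℂ = ⟪x, aeval (opT Γ) P y⟫_ℂ := by
  induction P using Polynomial.induction_on' with
  | add p q hp hq =>
    rw [map_add, add_apply, add_apply, inner_add_left,
      inner_add_right, hp, hq]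
  | monomial n a =>
    rw [aeval_monomial, Algebra.algebraMap_eq_smul_one, smul_mul_assoc, one_mul,
      smul_apply, smul_apply]
    change ⟪(a : ℂ) • (opT Γ ^ n) x, y⟫_ℂ = ⟪x, (a : ℂ) • (opT Γ ^ n) y⟫_ℂ
    rw [inner_smul_left, inner_smul_right, opT_pow_symm, Complex.conj_ofReal]

lemma aeval_moment (Γ : L2 →L[ℂ] L2) {ι : Type*} [Fintype ι] (t w : ι → ℝ) (n : ℕ)
    (hmom : ∀ k ≤ n, ⟪e0, (opT Γ ^ k) e0⟫_ℂ = ((∑ j, w j * t j ^ k : ℝ) : ℂ))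
    (P : ℝ[X]) (hP : P.natDegree ≤ n) :
    ⟪e0, aeval (opT Γ) P e0⟫_ℂ = ((∑ j, w j * P.eval (t j) : ℝ) : ℂ) := by
  have e : aeval (opT Γ) P e0 = ∑ k ∈ Finset.range (n + 1), (P.coeff k : ℂ) • (opT Γ ^ k) e0 := by
    rw [aeval_eq_sum_range' (Nat.lt_succ_of_le hP), sum_apply]
    rfl
  rw [e, inner_sum]
  have e2 : ∑ j, w j * P.eval (t j)
      = ∑ k ∈ Finset.range (n + 1), P.coeff k * ∑ j, w j * t j ^ k := by
    simp_rw [Finset.mul_sum]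
    rw [Finset.sum_comm]
    refine Finset.sum_congr rfl fun j _ => ?_
    rw [eval_eq_sum_range' (Nat.lt_succ_of_le hP), Finset.mul_sum]
    exact Finset.sum_congr rfl fun k _ => by ring
  rw [e2, Complex.ofReal_sum]
  refine Finset.sum_congr rfl fun k hk => ?_
  rw [inner_smul_right, hmom k (by simpa [Nat.lt_succ_iff] using hk), Complex.ofReal_mul]

lemma moment_family (Γ : L2 →L[ℂ] L2) {ι : Type*} [Fintype ι] [DecidableEq ι] (t w : ι → ℝ)
    (n : ℕ) (hcard : Fintype.card ι = n + 1) (ht : Function.Injective t) (hw : ∀ j, 0 < w j)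
    (o : ι) (ho : t o = 0)
    (hmom : ∀ k ≤ 2 * n, ⟪e0, (opT Γ ^ k) e0⟫_ℂ = ((∑ j, w j * t j ^ k : ℝ) : ℂ)) :
    ∃ (f : ι → L2) (a : ι → ℝ) (D : ℝ), Orthonormal ℂ f ∧ (∀ j, 0 < a j) ∧ 0 ≤ D ∧
      (∀ j, ‖ContinuousLinearMap.adjoint Γ (f j)‖ ^ 2 = t j + a j * D) ∧
      (D = 0 → ∀ j, opT Γ (f j) = (t j : ℂ) • f j) := by
  set T := opT Γ with hT
  let Qj : ι → ℝ[X] := fun j => ∏ k ∈ Finset.univ.erase j, (X - C (t k))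
  let Q : ℝ[X] := ∏ k, (X - C (t k))
  have hQ : ∀ j, Q = (X - C (t j)) * Qj j := fun j =>
    (Finset.mul_prod_erase _ _ (Finset.mem_univ j)).symm
  have hQm : ∀ j, (Qj j).Monic := fun j => monic_prod_X_sub_C t _
  have hQd : ∀ j, (Qj j).natDegree = n := by
    intro j
    rw [natDegree_prod _ _ fun k _ => X_sub_C_ne_zero _]
    simp [hcard]
  have hQe0 : ∀ j k, j ≠ k → (Qj j).eval (t k) = 0 := by
    intro j k hjk
    simp only [Qj, eval_prod, eval_sub, eval_X, eval_C]
    exact Finset.prod_eq_zero (i := k) (by simp [hjk.symm]) (sub_self _)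
  have hQe : ∀ j, (Qj j).eval (t j) ≠ 0 := by
    intro j
    simp only [Qj, eval_prod, eval_sub, eval_X, eval_C]
    refine Finset.prod_ne_zero_iff.2 fun k hk => sub_ne_zero.2 fun h => ?_
    exact Finset.ne_of_mem_erase hk (ht h).symm
  have hQ0 : ∀ k, Q.eval (t k) = 0 := by
    intro k; rw [hQ k]; simp
  let q : ι → ℝ := fun j => w j * (Qj j).eval (t j) ^ 2
  have hq : ∀ j, 0 < q j := fun j => mul_pos (hw j) (by have := hQe j; positivity)
  let F : ι → L2 := fun j => aeval T (Qj j) e0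
  have hFF : ∀ j k, ⟪F j, F k⟫_ℂ = if j = k then (q j : ℂ) else 0 := by
    intro j k
    have e1 : ⟪F j, F k⟫_ℂ = ⟪e0, aeval T (Qj j * Qj k) e0⟫_ℂ := by
      simp only [F]
      rw [aeval_symm, map_mul]; rfl
    rw [e1, aeval_moment Γ t w (2 * n) hmom _
      (natDegree_mul_le.trans (by rw [hQd, hQd]; omega))]
    split_ifs with h
    · subst h
      congr 1
      rw [Finset.sum_eq_single j]
      · simp only [eval_mul, q]; ring
      · intro b _ hb
        rw [eval_mul, hQe0 j b hb.symm]; ring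
      · simp
    · rw [Finset.sum_eq_zero]
      · simp
      · intro b _
        rw [eval_mul]
        by_cases hb : j = b
        · rw [hQe0 k b (by rintro rfl; exact h hb)]; ring
        · rw [hQe0 j b hb]; ring
  let D : ℝ := ‖ContinuousLinearMap.adjoint Γ (F o)‖ ^ 2
  have hTF : ∀ j, T (F j) = (t j : ℂ) • F j + aeval T Q e0 := by
    intro j
    rw [hQ j, map_mul, map_sub, aeval_X, aeval_C, mul_apply_eq_comp,
      sub_apply, Algebra.algebraMap_eq_smul_one]
    change _ = _ + (T (F j) - (t j : ℂ) • F j)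
    abel
  have hFQ : ∀ j, ⟪F j, aeval T Q e0⟫_ℂ = (D : ℂ) := by
    intro j
    have e1 : ∀ j, ⟪F j, aeval T Q e0⟫_ℂ = ⟪e0, aeval T (Qj j * Q) e0⟫_ℂ := by
      intro j
      simp only [F]
      rw [aeval_symm, map_mul]; rfl
    have e2 : ⟪e0, aeval T ((Qj j - Qj o) * Q) e0⟫_ℂ = 0 := by
      rw [aeval_moment Γ t w (2 * n) hmom]
      · simp [hQ0]
      · by_cases hz : Qj j - Qj o = 0
        · rw [hz]; simp
        have hd : (Qj j - Qj o).natDegree < n := by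
          rw [natDegree_lt_iff_degree_lt hz]
          have hd1 : (Qj j).degree = (n : WithBot ℕ) := by
            rw [degree_eq_natDegree (hQm j).ne_zero, hQd]
          have hd2 : (Qj o).degree = (n : WithBot ℕ) := by
            rw [degree_eq_natDegree (hQm o).ne_zero, hQd]
          rw [← hd1]
          refine degree_sub_lt_left (hd1.trans hd2.symm) (hQm j).ne_zero ?_
          rw [(hQm j).leadingCoeff, (hQm o).leadingCoeff]
        have hd' : Q.natDegree ≤ n + 1 := by
          rw [hQ o]
          refine natDegree_mul_le.trans ?_
          rw [hQd, natDegree_X_sub_C]; omega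
        exact natDegree_mul_le.trans (by omega)
    have e3 : ⟪F j, aeval T Q e0⟫_ℂ = ⟪F o, aeval T Q e0⟫_ℂ := by
      rw [← sub_eq_zero, e1, e1, ← inner_sub_right, ← sub_apply, ← map_sub,
        ← sub_mul]
      exact e2
    have e4 := hTF o
    rw [ho, Complex.ofReal_zero, zero_smul, zero_add] at e4
    rw [e3, ← e4]
    exact opT_inner_self Γ (F o)
  have hnF : ∀ j, ‖ContinuousLinearMap.adjoint Γ (F j)‖ ^ 2 = t j * q j + D := by
    intro j
    apply Complex.ofReal_injective
    rw [← opT_inner_self, ← hT, hTF, inner_add_right, inner_smul_right, hFF, if_pos rfl, hFQ]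
    push_cast; rfl
  have hsq : ∀ j, 0 < Real.sqrt (q j) := fun j => Real.sqrt_pos.2 (hq j)
  have hsq2 : ∀ j, Real.sqrt (q j) ^ 2 = q j := fun j => Real.sq_sqrt (hq j).le
  refine ⟨fun j => (((Real.sqrt (q j))⁻¹ : ℝ) : ℂ) • F j, fun j => (q j)⁻¹, D, ?_, ?_, ?_, ?_, ?_⟩
  · rw [orthonormal_iff_ite]
    intro j k
    rw [inner_smul_left, inner_smul_right, hFF, Complex.conj_ofReal]
    split_ifs with h
    · subst h
      have : (Real.sqrt (q j))⁻¹ * ((Real.sqrt (q j))⁻¹ * q j) = 1 := by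
        have := (hsq j).ne'
        field_simp
        rw [hsq2]
      exact_mod_cast this
    · simp
  · intro j; have := hq j; positivity
  · positivity
  · intro j
    rw [map_smul, norm_smul, mul_pow, hnF, Complex.norm_real, Real.norm_eq_abs, sq_abs, inv_pow,
      hsq2]
    have := (hq j).ne'
    field_simp
  · intro hD j
    have h0 : ContinuousLinearMap.adjoint Γ (F o) = 0 := by
      have : ‖ContinuousLinearMap.adjoint Γ (F o)‖ ^ 2 = 0 := hD
      simpa using this
    have h1 : aeval T Q e0 = 0 := by
      have e4 := hTF o
      rw [ho, Complex.ofReal_zero, zero_smul, zero_add] at e4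
      rw [← e4, hT, opT_apply, h0, map_zero]
    rw [map_smul, hTF, h1, add_zero, smul_comm]

end PartC


/-! ### Part D: finite rank operators with simple spectrum -/

section PartD

lemma range_le_of_adj {Γ : L2 →L[ℂ] L2} (F : Submodule ℂ L2) [FiniteDimensional ℂ F]
    (h : ∀ x ∈ Fᗮ, ContinuousLinearMap.adjoint Γ x = 0) (x : L2) : Γ x ∈ F := by
  rw [← Submodule.orthogonal_orthogonal F]
  intro y hy
  rw [← ContinuousLinearMap.adjoint_inner_left, h y hy, inner_zero_left]

lemma simple_of {Γ : L2 →L[ℂ] L2} {N : ℕ} (F : Submodule ℂ L2) [FiniteDimensional ℂ F]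
    (hF : Module.finrank ℂ F = N) (h : ∀ x ∈ Fᗮ, ContinuousLinearMap.adjoint Γ x = 0)
    (t : Fin N → ℝ) (htinj : Function.Injective t) (htpos : ∀ j, 0 < t j) (v : Fin N → L2)
    (hvF : ∀ j, v j ∈ F) (hv0 : ∀ j, v j ≠ 0) (hv : ∀ j, opT Γ (v j) = (t j : ℂ) • v j) :
    HasSimpleSVals Γ N (fun j => Real.sqrt (t j)) := by
  classical
  have hsq : ∀ j, ((Real.sqrt (t j) : ℂ)) ^ 2 = (t j : ℂ) := by
    intro j
    rw [← Complex.ofReal_pow, Real.sq_sqrt (htpos j).le]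
  have htne : ∀ j, (t j : ℂ) ≠ 0 := fun j => Complex.ofReal_ne_zero.2 (htpos j).ne'
  have hli : LinearIndependent ℂ v := by
    refine Module.End.eigenvectors_linearIndependent' (opT Γ).toLinearMap (fun j => (t j : ℂ))
      (Complex.ofReal_injective.comp htinj) v fun j => ?_
    rw [Module.End.hasEigenvector_iff, Module.End.mem_eigenspace_iff]
    exact ⟨hv j, hv0 j⟩
  have hspan : Submodule.span ℂ (Set.range v) = F := by
    apply Submodule.eq_of_le_of_finrank_eq
    · rw [Submodule.span_le]; rintro _ ⟨j, rfl⟩; exact hvF j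
    · rw [finrank_span_eq_card hli, hF]; simp
  have hrange : LinearMap.range Γ.toLinearMap = F := by
    apply le_antisymm
    · rintro _ ⟨x, rfl⟩
      exact range_le_of_adj F h x
    · rw [← hspan, Submodule.span_le]
      rintro _ ⟨j, rfl⟩
      refine ⟨(t j : ℂ)⁻¹ • ContinuousLinearMap.adjoint Γ (v j), ?_⟩
      rw [map_smul]
      change (t j : ℂ)⁻¹ • opT Γ (v j) = v j
      rw [hv, smul_smul, inv_mul_cancel₀ (htne j), one_smul]
  have heig : ∀ (z : ℂ) (x : L2), z ≠ 0 → opT Γ x = z • x →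
      ∃ a : Fin N → ℂ, x = ∑ j, a j • v j ∧ ∀ j, a j ≠ 0 → (t j : ℂ) = z := by
    intro z x hz hx
    have hxF : x ∈ F := by
      have : x = z⁻¹ • opT Γ x := by rw [hx, smul_smul, inv_mul_cancel₀ hz, one_smul]
      rw [this]
      exact F.smul_mem _ (range_le_of_adj F h _)
    rw [← hspan, Submodule.mem_span_range_iff_exists_fun] at hxF
    obtain ⟨a, ha⟩ := hxF
    refine ⟨a, ha.symm, fun j hj => ?_⟩
    have h0 : ∑ j, (a j * ((t j : ℂ) - z)) • v j = 0 := by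
      have h1 : opT Γ x = ∑ j, (a j * (t j : ℂ)) • v j := by
        rw [← ha, map_sum]
        refine Finset.sum_congr rfl fun j _ => ?_
        rw [map_smul, hv, smul_smul]
      have h2 : z • x = ∑ j, (a j * z) • v j := by
        rw [← ha, Finset.smul_sum]
        refine Finset.sum_congr rfl fun j _ => ?_
        rw [smul_smul, mul_comm]
      simp only [mul_sub, sub_smul, Finset.sum_sub_distrib]
      rw [← h1, ← h2, hx, sub_self]
    have := (Fintype.linearIndependent_iff.1 hli) _ h0 j
    rcases mul_eq_zero.1 this with h | h
    · exact absurd h hj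
    · exact sub_eq_zero.1 h
  refine ⟨?_, ?_, ?_⟩
  · rw [LinearMap.rank, hrange, ← Module.finrank_eq_rank, hF]
  · ext z
    simp only [Set.mem_ofPred_eq, Set.mem_range, hsq]
    constructor
    · rintro ⟨hz, hev⟩
      obtain ⟨x, hx⟩ := hev.exists_hasEigenvector
      rw [Module.End.hasEigenvector_iff, Module.End.mem_eigenspace_iff] at hx
      obtain ⟨a, ha, ha'⟩ := heig z x hz hx.1
      by_contra hcon
      push Not at hcon
      apply hx.2
      rw [ha]
      refine Finset.sum_eq_zero fun j _ => ?_
      by_cases hj : a j = 0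
      · rw [hj, zero_smul]
      · exact absurd (ha' j hj) (hcon j)
    · rintro ⟨j, rfl⟩
      refine ⟨htne j, Module.End.hasEigenvalue_of_hasEigenvector (x := v j) ?_⟩
      rw [Module.End.hasEigenvector_iff, Module.End.mem_eigenspace_iff]
      exact ⟨hv j, hv0 j⟩
  · intro j
    rw [hsq j]
    have : Module.End.eigenspace (opT Γ).toLinearMap (t j : ℂ) = Submodule.span ℂ {v j} := by
      apply le_antisymm
      · intro x hx
        rw [Module.End.mem_eigenspace_iff] at hx
        obtain ⟨a, ha, ha'⟩ := heig _ x (htne j) hx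
        rw [Submodule.mem_span_singleton]
        refine ⟨a j, ?_⟩
        rw [ha, Finset.sum_eq_single j]
        · intro b _ hb
          by_cases h0 : a b = 0
          · rw [h0, zero_smul]
          · exact absurd (htinj (Complex.ofReal_injective (ha' b h0))) hb
        · simp
      · rw [Submodule.span_singleton_le_iff_mem, Module.End.mem_eigenspace_iff]
        exact hv j
    rw [this]
    exact finrank_span_singleton (hv0 j)

lemma of_simple {Γ : L2 →L[ℂ] L2} {N : ℕ} (t : Fin N → ℝ) (htinj : Function.Injective t)
    (htpos : ∀ j, 0 < t j) (h : HasSimpleSVals Γ N (fun j => Real.sqrt (t j))) :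
    ∃ f : Fin N → L2, Orthonormal ℂ f ∧ (∀ j, opT Γ (f j) = (t j : ℂ) • f j) ∧
      LinearMap.range Γ.toLinearMap = Submodule.span ℂ (Set.range f) := by
  have hsq : ∀ j, ((Real.sqrt (t j) : ℂ)) ^ 2 = (t j : ℂ) := by
    intro j
    rw [← Complex.ofReal_pow, Real.sq_sqrt (htpos j).le]
  have htne : ∀ j, (t j : ℂ) ≠ 0 := fun j => Complex.ofReal_ne_zero.2 (htpos j).ne'
  obtain ⟨hr, -, hs⟩ := h
  replace hs : ∀ j, Module.finrank ℂ (Module.End.eigenspace (opT Γ).toLinearMap (t j : ℂ)) = 1 := by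
    intro j
    have := hs j
    rwa [hsq j] at this
  have hex : ∀ j, ∃ x : L2, ‖x‖ = 1 ∧ opT Γ x = (t j : ℂ) • x := by
    intro j
    have hne : Module.End.eigenspace (opT Γ).toLinearMap (t j : ℂ) ≠ ⊥ := by
      intro hb
      have := hs j
      rw [hb, finrank_bot] at this
      omega
    obtain ⟨x, hx, hx0⟩ := Submodule.exists_mem_ne_zero_of_ne_bot hne
    rw [Module.End.mem_eigenspace_iff] at hx
    have hx' : opT Γ x = (t j : ℂ) • x := hx
    refine ⟨((‖x‖⁻¹ : ℝ) : ℂ) • x, ?_, ?_⟩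
    · rw [norm_smul, Complex.norm_real, norm_inv, norm_norm, inv_mul_cancel₀ (norm_ne_zero_iff.2 hx0)]
    · rw [map_smul, hx', smul_comm]
  choose f hf1 hf2 using hex
  have hon : Orthonormal ℂ f := by
    refine ⟨hf1, fun j k hjk => ?_⟩
    have := opT_symm Γ (f j) (f k)
    rw [hf2, hf2, inner_smul_left, inner_smul_right, Complex.conj_ofReal, ← sub_eq_zero,
      ← sub_mul] at this
    rcases mul_eq_zero.1 this with h | h
    · exact absurd (htinj (Complex.ofReal_injective (sub_eq_zero.1 h))) hjk
    · exact h
  refine ⟨f, hon, hf2, ?_⟩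
  have hfr : Module.finrank ℂ (LinearMap.range Γ.toLinearMap) = N :=
    Module.finrank_eq_of_rank_eq hr
  have : FiniteDimensional ℂ (LinearMap.range Γ.toLinearMap) := by
    rw [FiniteDimensional, ← Module.rank_lt_aleph0_iff]
    change LinearMap.rank Γ.toLinearMap < _
    rw [hr]; exact Cardinal.natCast_lt_aleph0
  symm
  apply Submodule.eq_of_le_of_finrank_eq
  · rw [Submodule.span_le]
    rintro _ ⟨j, rfl⟩
    refine ⟨(t j : ℂ)⁻¹ • ContinuousLinearMap.adjoint Γ (f j), ?_⟩
    rw [map_smul]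
    change (t j : ℂ)⁻¹ • opT Γ (f j) = f j
    rw [hf2, smul_smul, inv_mul_cancel₀ (htne j), one_smul]
  · rw [finrank_span_eq_card hon.linearIndependent, hfr]; simp

/-- Expansion in an orthonormal family. -/
lemma on_expand {N : ℕ} {f : Fin N → L2} (hf : Orthonormal ℂ f) {x : L2}
    (hx : x ∈ Submodule.span ℂ (Set.range f)) : x = ∑ j, ⟪f j, x⟫_ℂ • f j := by
  obtain ⟨a, ha⟩ := (Submodule.mem_span_range_iff_exists_fun ℂ).1 hx
  conv_lhs => rw [← ha]
  refine Finset.sum_congr rfl fun j _ => ?_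
  rw [← ha, hf.inner_right_fintype]

lemma opT_expand {Γ : L2 →L[ℂ] L2} {N : ℕ} {f : Fin N → L2} (hf : Orthonormal ℂ f)
    {t : Fin N → ℝ} (hv : ∀ j, opT Γ (f j) = (t j : ℂ) • f j)
    (hr : ∀ x, Γ x ∈ Submodule.span ℂ (Set.range f)) (x : L2) :
    opT Γ x = ∑ j, ((t j : ℂ) * ⟪f j, x⟫_ℂ) • f j := by
  rw [opT_apply, on_expand hf (hr (ContinuousLinearMap.adjoint Γ x))]
  refine Finset.sum_congr rfl fun j _ => ?_
  rw [← opT_apply, ← opT_symm, hv, inner_smul_left, Complex.conj_ofReal]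

lemma opT_pow_expand {Γ : L2 →L[ℂ] L2} {N : ℕ} {f : Fin N → L2} (hf : Orthonormal ℂ f)
    {t : Fin N → ℝ} (hv : ∀ j, opT Γ (f j) = (t j : ℂ) • f j) {x : L2}
    (hx : x ∈ Submodule.span ℂ (Set.range f)) (n : ℕ) :
    ⟪x, (opT Γ ^ n) x⟫_ℂ = ((∑ j, t j ^ n * ‖⟪f j, x⟫_ℂ‖ ^ 2 : ℝ) : ℂ) := by
  have hp : ∀ j, (opT Γ ^ n) (f j) = ((t j : ℂ) ^ n) • f j := by
    intro j
    induction n with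
    | zero => simp
    | succ n ih =>
      have e2 : (opT Γ ^ (n + 1)) (f j) = opT Γ ((opT Γ ^ n) (f j)) := by rw [pow_succ']; rfl
      rw [e2, ih, map_smul, hv, smul_smul, pow_succ]
  have e : (opT Γ ^ n) x = ∑ j, (⟪f j, x⟫_ℂ * (t j : ℂ) ^ n) • f j := by
    conv_lhs => rw [on_expand hf hx, map_sum]
    refine Finset.sum_congr rfl fun j _ => ?_
    rw [map_smul, hp, smul_smul]
  rw [e, inner_sum, Complex.ofReal_sum]
  refine Finset.sum_congr rfl fun j _ => ?_
  rw [inner_smul_right, ← inner_conj_symm x]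
  have := Complex.mul_conj' (⟪f j, x⟫_ℂ)
  push_cast
  rw [← this]; ring

end PartD


/-! ### Part E: the constrained problem -/

section PartE

lemma hankel_e0_norm {c : ℕ → ℂ} {Γ : L2 →L[ℂ] L2} (h : IsHankelOp c Γ) {s : ℝ}
    (hm : ⟪e0, (opT Γ ^ 1) e0⟫_ℂ = (s : ℂ)) : ‖Γ e0‖ ^ 2 = s := by
  rw [pow_one, opT_inner_self, e0_eq, norm_adj_eb h] at hm
  rw [e0_eq]
  exact_mod_cast hm

/-- The lower bound, together with the eigenvectors in the case of equality. -/
lemma min_family {N : ℕ} (hN : 1 ≤ N) {i l w : Fin N → ℝ} (sd : SpecData N i l w)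
    {c : ℕ → ℂ} (hc : InH12 c) {Γ : L2 →L[ℂ] L2} (h : IsHankelOp c Γ)
    (hmom : ∀ n : ℕ, 1 ≤ n → n ≤ 2 * N →
      ⟪e0, (opT Γ ^ n) e0⟫_ℂ = ((∑ j, w j * i j ^ n : ℝ) : ℂ)) :
    (∑ m, l m ≤ ∑' n : ℕ, (n : ℝ) * ‖c n‖ ^ 2) ∧
    (∑' n : ℕ, (n : ℝ) * ‖c n‖ ^ 2 = ∑ m, l m →
      ∃ f : Fin N → L2, Orthonormal ℂ f ∧ (∀ j, opT Γ (f j) = (i j : ℂ) • f j) ∧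
        ∀ x ∈ (Submodule.span ℂ (Set.range f))ᗮ, ContinuousLinearMap.adjoint Γ x = 0) := by
  classical
  let t' : Option (Fin N) → ℝ := fun o => o.elim 0 i
  let w' : Option (Fin N) → ℝ := fun o => o.elim (1 - ∑ j, w j) w
  have hmom' : ∀ k ≤ 2 * N, ⟪e0, (opT Γ ^ k) e0⟫_ℂ = ((∑ j, w' j * t' j ^ k : ℝ) : ℂ) := by
    intro k hk
    rw [Fintype.sum_option]
    rcases Nat.eq_zero_or_pos k with rfl | hk0
    · simp only [pow_zero, mul_one, w', Option.elim]
      rw [show (1 : L2 →L[ℂ] L2) e0 = e0 from rfl, e0_eq, inner_eb, eb_apply]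
      simp
    · rw [hmom k hk0 hk]
      simp [w', t', hk0.ne']
  have ht' : Function.Injective t' := by
    intro a b hab
    cases a <;> cases b
    · rfl
    · exact absurd hab (sd.i_pos _).ne
    · exact absurd hab (sd.i_pos _).ne'
    · exact congrArg some (sd.i_inj hab)
  have hw' : ∀ j, 0 < w' j := by
    intro j
    cases j
    · exact sd.w0_pos
    · exact sd.w_pos _
  obtain ⟨f, a, D, hf, ha, hD, hn, heq⟩ := moment_family Γ t' w' N (by simp) ht' hw' none rfl hmom'
  have hs := hankel_bessel h hc f hf
  have h0 : ‖Γ e0‖ ^ 2 = ∑ j, w j * i j := by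
    apply hankel_e0_norm h
    rw [hmom 1 le_rfl (by omega)]
    simp
  have htr := sd.trace
  have hsum : ∑ o, ‖ContinuousLinearMap.adjoint Γ (f o)‖ ^ 2 = ∑ j, i j + (∑ o, a o) * D := by
    simp only [hn, Finset.sum_add_distrib, ← Finset.sum_mul]
    rw [Fintype.sum_option]
    simp [t']
  have hA : 0 < ∑ o, a o := Finset.sum_pos (fun o _ => ha o) ⟨none, Finset.mem_univ _⟩
  have hAD : 0 ≤ (∑ o, a o) * D := mul_nonneg hA.le hD
  refine ⟨by linarith, fun hM => ?_⟩
  have hD0 : D = 0 := by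
    have : (∑ o, a o) * D = 0 := by linarith
    exact (mul_eq_zero.1 this).resolve_left hA.ne'
  have hfe := heq hD0
  refine ⟨fun j => f (some j), hf.comp _ (Option.some_injective _), fun j => hfe (some j), ?_⟩
  -- vectors orthogonal to the whole family are killed
  have hkill : ∀ y : L2, (∀ o, ⟪f o, y⟫_ℂ = 0) → ContinuousLinearMap.adjoint Γ y = 0 := by
    intro y hy
    by_contra hne
    have hy0 : y ≠ 0 := by rintro rfl; simp at hne
    let g : L2 := ((‖y‖⁻¹ : ℝ) : ℂ) • y
    have hg1 : ‖g‖ = 1 := by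
      rw [norm_smul, Complex.norm_real, norm_inv, norm_norm, inv_mul_cancel₀ (norm_ne_zero_iff.2 hy0)]
    have hg0 : ∀ o, ⟪f o, g⟫_ℂ = 0 := by
      intro o; rw [inner_smul_right, hy, mul_zero]
    let F : Option (Option (Fin N)) → L2 := fun o => o.elim g f
    have hF : Orthonormal ℂ F := by
      refine ⟨?_, ?_⟩
      · intro o
        cases o
        · exact hg1
        · exact hf.1 _
      · intro o p hop
        cases o <;> cases p
        · exact absurd rfl hop
        · change ⟪g, f _⟫_ℂ = 0
          rw [← inner_conj_symm, hg0, map_zero]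
        · exact hg0 _
        · exact hf.2 fun h => hop (congrArg some h)
    have hb := hankel_bessel h hc F hF
    rw [Fintype.sum_option] at hb
    simp only [F, Option.elim] at hb
    rw [hsum, hD0] at hb
    have hz : ‖ContinuousLinearMap.adjoint Γ g‖ ^ 2 ≤ 0 := by linarith
    have hz' : ContinuousLinearMap.adjoint Γ g = 0 := by
      have := le_antisymm hz (by positivity)
      simpa using this
    rw [map_smul] at hz'
    rcases smul_eq_zero.1 hz' with hh | hh
    · have : ‖y‖⁻¹ = 0 := by exact_mod_cast hh
      exact hy0 (norm_eq_zero.1 (inv_eq_zero.1 this))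
    · exact hne hh
  intro x hx
  have hx' : ∀ j, ⟪f (some j), x⟫_ℂ = 0 := by
    intro j
    exact hx _ (Submodule.subset_span ⟨j, rfl⟩)
  have hf0 : ContinuousLinearMap.adjoint Γ (f none) = 0 := by
    apply opT_eq_zero
    rw [hfe none]
    simp [t']
  have h2 := hkill (x - ⟪f none, x⟫_ℂ • f none) (by
    intro o
    rw [inner_sub_right, inner_smul_right]
    rw [orthonormal_iff_ite] at hf
    cases o
    · rw [hf]; simp
    · rw [hx', hf]; simp)
  rw [map_sub, map_smul, hf0, smul_zero, sub_zero] at h2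
  exact h2

/-- The squared coefficients of `c` are determined by the moments. -/
lemma coeff_of_moment {N : ℕ} {i l w : Fin N → ℝ} (sd : SpecData N i l w)
    {c : ℕ → ℂ} {Γ : L2 →L[ℂ] L2} (h : IsHankelOp c Γ)
    (hmom : ∀ n : ℕ, 1 ≤ n → n ≤ 2 * N →
      ⟪e0, (opT Γ ^ n) e0⟫_ℂ = ((∑ j, w j * i j ^ n : ℝ) : ℂ))
    {f : Fin N → L2} (hf : Orthonormal ℂ f) (hfe : ∀ j, opT Γ (f j) = (i j : ℂ) • f j)
    (hcF : Γ e0 ∈ Submodule.span ℂ (Set.range f)) (j : Fin N) :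
    ‖⟪f j, Γ e0⟫_ℂ‖ ^ 2 = i j * w j := by
  have hz : (fun j => ‖⟪f j, Γ e0⟫_ℂ‖ ^ 2 - i j * w j) = 0 := by
    apply Matrix.eq_zero_of_forall_pow_sum_mul_pow_eq_zero sd.i_inj
    intro n
    have h1 := hmom (n + 1) (by omega) (by omega)
    rw [hankel_moment h, opT_pow_expand hf hfe hcF] at h1
    have h2 := Complex.ofReal_injective h1
    have h3 : ∑ j, (‖⟪f j, Γ e0⟫_ℂ‖ ^ 2 - i j * w j) * i j ^ (n : ℕ)
        = ∑ j, i j ^ (n : ℕ) * ‖⟪f j, Γ e0⟫_ℂ‖ ^ 2 - ∑ j, w j * i j ^ ((n : ℕ) + 1) := by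
      rw [← Finset.sum_sub_distrib]
      exact Finset.sum_congr rfl fun j _ => by ring
    rw [h3, h2, sub_self]
  exact sub_eq_zero.1 (congrFun hz j)

lemma minimizer_mem {N : ℕ} (hN : 1 ≤ N) {i l w : Fin N → ℝ} (sd : SpecData N i l w)
    {c : ℕ → ℂ} (hc : InH12 c) {Γ : L2 →L[ℂ] L2} (h : IsHankelOp c Γ)
    (hmom : ∀ n : ℕ, 1 ≤ n → n ≤ 2 * N →
      ⟪e0, (opT Γ ^ n) e0⟫_ℂ = ((∑ j, w j * i j ^ n : ℝ) : ℂ))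
    (hM : ∑' n : ℕ, (n : ℝ) * ‖c n‖ ^ 2 = ∑ m, l m) :
    ∃ Γt : L2 →L[ℂ] L2, IsHankelOp (shiftSeq c) Γt ∧
      HasSimpleSVals Γ N (fun j => Real.sqrt (i j)) ∧
      HasSimpleSVals Γt N (fun j => Real.sqrt (l j)) := by
  obtain ⟨Γt, ht⟩ := exists_shift h
  obtain ⟨f, hf, hfe, hk⟩ := (min_family hN sd hc h hmom).2 hM
  set F := Submodule.span ℂ (Set.range f) with hF
  have : FiniteDimensional ℂ F := FiniteDimensional.span_of_finite ℂ (Set.finite_range f)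
  have hfr : Module.finrank ℂ F = N := by
    rw [hF, finrank_span_eq_card hf.linearIndependent]; simp
  have hcF : Γ e0 ∈ F := range_le_of_adj F hk e0
  have hfF : ∀ j, f j ∈ F := fun j => Submodule.subset_span ⟨j, rfl⟩
  have hco := coeff_of_moment sd h hmom hf hfe hcF
  refine ⟨Γt, ht, simple_of F hfr hk i sd.i_inj sd.i_pos f hfF
    (fun j => hf.ne_zero j) hfe, ?_⟩
  let v : Fin N → L2 := fun k => ∑ j, (⟪f j, Γ e0⟫_ℂ / ((i j : ℂ) - l k)) • f j
  have hil : ∀ j k, (i j : ℂ) - l k ≠ 0 := fun j k =>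
    sub_ne_zero.2 fun h => sd.i_ne_l j k (Complex.ofReal_injective h)
  have hcv : ∀ k, ⟪Γ e0, v k⟫_ℂ = 1 := by
    intro k
    rw [inner_sum]
    have h1 := sd.cauchy k
    have h2 : ((∑ j, i j * w j / (i j - l k) : ℝ) : ℂ) = 1 := by rw [h1]; simp
    rw [← h2, Complex.ofReal_sum]
    refine Finset.sum_congr rfl fun j _ => ?_
    rw [inner_smul_right, ← inner_conj_symm (Γ e0), div_mul_eq_mul_div, Complex.mul_conj', ← hco]
    push_cast; rfl
  refine simple_of F hfr (fun x hx => hankel_adj_zero h ht x (hk x hx)) l sd.l_inj sd.l_pos v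
    (fun k => F.sum_mem fun j _ => F.smul_mem _ (hfF j)) ?_ ?_
  · intro k hv0
    have := hcv k
    rw [hv0, inner_zero_right] at this
    exact zero_ne_one this
  · intro k
    have h1 := hankel_rank_one h ht (v k)
    rw [hcv, one_smul] at h1
    rw [eq_sub_iff_add_eq.2 h1.symm]
    conv_lhs => rw [on_expand hf hcF]
    simp only [v, map_sum, map_smul, hfe, Finset.smul_sum, ← Finset.sum_sub_distrib, smul_smul,
      ← sub_smul]
    refine Finset.sum_congr rfl fun j _ => ?_
    congr 1
    have := hil j k
    field_simp
    ring

lemma simple_moment {N : ℕ} (hN : 1 ≤ N) {i l w : Fin N → ℝ} (sd : SpecData N i l w)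
    {c : ℕ → ℂ} (hc : InH12 c) {Γ Γt : L2 →L[ℂ] L2} (h : IsHankelOp c Γ)
    (ht : IsHankelOp (shiftSeq c) Γt)
    (hs : HasSimpleSVals Γ N (fun j => Real.sqrt (i j)))
    (hst : HasSimpleSVals Γt N (fun j => Real.sqrt (l j))) :
    (∀ n : ℕ, 1 ≤ n → n ≤ 2 * N →
      ⟪e0, (opT Γ ^ n) e0⟫_ℂ = ((∑ j, w j * i j ^ n : ℝ) : ℂ)) ∧
    ∑' n : ℕ, (n : ℝ) * ‖c n‖ ^ 2 = ∑ m, l m := by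
  obtain ⟨f, hf, hfe, hr⟩ := of_simple i sd.i_inj sd.i_pos hs
  obtain ⟨g, hg, hge, -⟩ := of_simple l sd.l_inj sd.l_pos hst
  have hrF : ∀ x, Γ x ∈ Submodule.span ℂ (Set.range f) := fun x => hr ▸ ⟨x, rfl⟩
  have hgF : ∀ k, g k ∈ Submodule.span ℂ (Set.range f) := by
    intro k
    have h1 := hankel_rank_one h ht (g k)
    rw [hge] at h1
    have h2 : g k = (l k : ℂ)⁻¹ • (opT Γ (g k) - ⟪Γ e0, g k⟫_ℂ • Γ e0) := by
      rw [h1, add_sub_cancel_right, smul_smul,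
        inv_mul_cancel₀ (Complex.ofReal_ne_zero.2 (sd.l_pos k).ne'), one_smul]
    rw [h2]
    exact Submodule.smul_mem _ _ (Submodule.sub_mem _ (hrF _) (Submodule.smul_mem _ _ (hrF _)))
  have hil : ∀ j k, (i j : ℂ) - l k ≠ 0 := fun j k =>
    sub_ne_zero.2 fun h => sd.i_ne_l j k (Complex.ofReal_injective h)
  have hfg : ∀ j k, ⟪f j, g k⟫_ℂ = ⟪f j, Γ e0⟫_ℂ * ⟪Γ e0, g k⟫_ℂ / ((i j : ℂ) - l k) := by
    intro j k
    have h1 := congrArg (fun x => ⟪f j, x⟫_ℂ) (hankel_rank_one h ht (g k))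
    rw [← opT_symm, hfe, hge, inner_smul_left, Complex.conj_ofReal, inner_add_right,
      inner_smul_right, inner_smul_right] at h1
    rw [eq_div_iff (hil j k)]
    linear_combination h1
  have hcg : ∀ k, ⟪Γ e0, g k⟫_ℂ ≠ 0 := by
    intro k h0
    apply hg.ne_zero k
    rw [on_expand hf (hgF k)]
    refine Finset.sum_eq_zero fun j _ => ?_
    rw [hfg, h0]; simp
  have hco : ∀ j, ‖⟪f j, Γ e0⟫_ℂ‖ ^ 2 = i j * w j := by
    have hz : (fun j => ‖⟪f j, Γ e0⟫_ℂ‖ ^ 2 - i j * w j) = 0 := by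
      apply cauchy_inj i l _ sd.i_inj sd.l_inj sd.i_ne_l
      intro k
      simp only [sub_div, Finset.sum_sub_distrib]
      rw [sd.cauchy k, sub_eq_zero]
      apply Complex.ofReal_injective
      apply mul_right_cancel₀ (hcg k)
      have h1 : ⟪Γ e0, g k⟫_ℂ = ∑ j, ⟪f j, g k⟫_ℂ * ⟪Γ e0, f j⟫_ℂ := by
        conv_lhs => rw [on_expand hf (hgF k), inner_sum]
        exact Finset.sum_congr rfl fun j _ => inner_smul_right _ _ _
      rw [Complex.ofReal_one, one_mul]
      conv_rhs => rw [h1]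
      rw [Complex.ofReal_sum, Finset.sum_mul]
      refine Finset.sum_congr rfl fun j _ => ?_
      rw [hfg, ← inner_conj_symm (Γ e0) (f j)]
      have := Complex.mul_conj' (⟪f j, Γ e0⟫_ℂ)
      push_cast
      rw [← this]; ring
    intro j
    exact sub_eq_zero.1 (congrFun hz j)
  have hmom : ∀ n : ℕ, 1 ≤ n → n ≤ 2 * N →
      ⟪e0, (opT Γ ^ n) e0⟫_ℂ = ((∑ j, w j * i j ^ n : ℝ) : ℂ) := by
    intro n hn _
    obtain ⟨m, rfl⟩ := Nat.exists_eq_add_of_le' hn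
    rw [hankel_moment h, opT_pow_expand hf hfe (hrF _)]
    congr 1
    refine Finset.sum_congr rfl fun j _ => ?_
    rw [hco]; ring
  refine ⟨hmom, ?_⟩
  have h0 : ‖Γ e0‖ ^ 2 = ∑ j, w j * i j := by
    apply hankel_e0_norm h
    rw [hmom 1 le_rfl (by omega)]
    simp
  have h1 := hankel_trace h hc f hf.1 i (opT_expand hf hfe hrF)
  have := sd.trace
  linarith

end PartE


/-! ### Part G: existence of a point of the torus -/

section PartG

open Filter Topology

variable {E : Type*} [NormedAddCommGroup E] [InnerProductSpace ℂ E] [FiniteDimensional ℂ E]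

/-- Algebraic data from which a Hankel operator is built. -/
structure ModelData (Λ Li R Ri M : E →L[ℂ] E) (γ : E) : Prop where
  lam_symm : ∀ x y, ⟪Λ x, y⟫_ℂ = ⟪x, Λ y⟫_ℂ
  li_symm : ∀ x y, ⟪Li x, y⟫_ℂ = ⟪x, Li y⟫_ℂ
  ri_symm : ∀ x y, ⟪Ri x, y⟫_ℂ = ⟪x, Ri y⟫_ℂ
  m_symm : ∀ x y, ⟪M x, y⟫_ℂ = ⟪x, M y⟫_ℂ
  lam_li : ∀ x, Λ (Li x) = x
  li_lam : ∀ x, Li (Λ x) = x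
  r_r : ∀ x, R (R x) = Λ x
  r_ri : ∀ x, R (Ri x) = x
  ri_r : ∀ x, Ri (R x) = x
  m_sq : ∀ x, M (M x) = Λ (Λ x) - ⟪γ, x⟫_ℂ • γ
  cyc : ∀ z, (∀ n : ℕ, ⟪γ, (Λ ^ n) z⟫_ℂ = 0) → z = 0

namespace ModelData

variable {Λ Li R Ri M : E →L[ℂ] E} {γ : E}

lemma contr (md : ModelData Λ Li R Ri M γ) (z : E) :
    ‖Λ z‖ ^ 2 = ‖M z‖ ^ 2 + ‖⟪γ, z⟫_ℂ‖ ^ 2 := by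
  have h1 : ⟪Λ z, Λ z⟫_ℂ = ⟪M z, M z⟫_ℂ + ⟪γ, z⟫_ℂ * ⟪z, γ⟫_ℂ := by
    rw [md.lam_symm, md.m_symm, md.m_sq, inner_sub_right, inner_smul_right]
    ring
  rw [← inner_conj_symm z γ, Complex.mul_conj', inner_self_eq_norm_sq_to_K,
    inner_self_eq_norm_sq_to_K] at h1
  apply Complex.ofReal_injective
  push_cast
  exact h1

lemma contr_b (md : ModelData Λ Li R Ri M γ) (x : E) :
    ‖x‖ ^ 2 = ‖(M * Li) x‖ ^ 2 + ‖⟪γ, Li x⟫_ℂ‖ ^ 2 := by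
  have := md.contr (Li x)
  rwa [md.lam_li] at this

lemma no_unit (md : ModelData Λ Li R Ri M γ) (s : ℝ) (hs : s ^ 2 = 1) (z : E)
    (hz : M z = (s : ℂ) • Λ z) : z = 0 := by
  have step : ∀ z : E, M z = (s : ℂ) • Λ z → ⟪γ, z⟫_ℂ = 0 ∧ M (Λ z) = (s : ℂ) • Λ (Λ z) := by
    intro z hz
    have hs' : ‖(s : ℂ)‖ ^ 2 = 1 := by rw [Complex.norm_real, Real.norm_eq_abs, sq_abs, hs]
    have h1 := md.contr z
    rw [hz, norm_smul, mul_pow, hs', one_mul] at h1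
    have h2 : ⟪γ, z⟫_ℂ = 0 := by
      have : ‖⟪γ, z⟫_ℂ‖ ^ 2 = 0 := by linarith
      simpa using this
    refine ⟨h2, ?_⟩
    have h3 := md.m_sq z
    rw [h2, zero_smul, sub_zero, hz, map_smul] at h3
    rw [← h3, smul_smul]
    have : (s : ℂ) * s = 1 := by
      rw [← sq]; exact_mod_cast hs
    rw [this, one_smul]
  apply md.cyc
  have key : ∀ n : ℕ, M ((Λ ^ n) z) = (s : ℂ) • Λ ((Λ ^ n) z) := by
    intro n
    induction n with
    | zero => exact hz
    | succ n ih =>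
      rw [pow_succ']
      exact (step _ ih).2
  exact fun n => (step _ (key n)).1

lemma stable (md : ModelData Λ Li R Ri M γ) (x : E) :
    Tendsto (fun n : ℕ => ((M * Li) ^ n) x) atTop (𝓝 0) := by
  let S : E →ₗ[ℂ] E := (Ri ∘L M ∘L Ri).toLinearMap
  have hSa : ∀ y, S y = Ri (M (Ri y)) := fun y => rfl
  have hS : S.IsSymmetric := by
    intro x y
    rw [hSa, hSa, md.ri_symm, md.m_symm, md.ri_symm]
  let b := hS.eigenvectorBasis rfl
  let s := hS.eigenvalues rfl
  have hb : ∀ k, S (b k) = (s k : ℂ) • b k := fun k => hS.apply_eigenvectorBasis rfl k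
  have hLiR : ∀ y, Li (R y) = Ri y := by
    intro y
    conv_lhs => rw [← md.r_ri y, md.r_r, md.li_lam]
  have hB : ∀ k, (M * Li) (R (b k)) = (s k : ℂ) • R (b k) := by
    intro k
    have := congrArg R (hb k)
    rw [hSa, md.r_ri, map_smul] at this
    change M (Li (R (b k))) = _
    rw [hLiR, this]
  have hBn : ∀ k (n : ℕ), ((M * Li) ^ n) (R (b k)) = ((s k : ℂ) ^ n) • R (b k) := by
    intro k n
    induction n with
    | zero => simp
    | succ n ih =>
      rw [pow_succ']
      change (M * Li) (((M * Li) ^ n) (R (b k))) = _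
      rw [ih, map_smul, hB, smul_smul, pow_succ]
  have hR0 : ∀ k, R (b k) ≠ 0 := by
    intro k h0
    have := md.ri_r (b k)
    rw [h0, map_zero] at this
    exact b.orthonormal.ne_zero k this.symm
  have hs1 : ∀ k, |s k| < 1 := by
    intro k
    have h1 := md.contr_b (R (b k))
    rw [hB, norm_smul, mul_pow, Complex.norm_real, Real.norm_eq_abs] at h1
    have hpos : 0 < ‖R (b k)‖ ^ 2 := by have := norm_pos_iff.2 (hR0 k); positivity
    have hle : |s k| ^ 2 ≤ 1 := by
      by_contra hgt
      push Not at hgt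
      have := sq_nonneg ‖⟪γ, Li (R (b k))⟫_ℂ‖
      nlinarith
    have hne : |s k| ^ 2 ≠ 1 := by
      intro he
      rw [sq_abs] at he
      have h2 := md.no_unit (s k) he (Li (R (b k))) (by rw [md.lam_li]; exact hB k)
      rw [hLiR] at h2
      have h3 := md.r_ri (b k)
      rw [h2, map_zero] at h3
      exact b.orthonormal.ne_zero k h3.symm
    have hlt := lt_of_le_of_ne hle hne
    have := abs_nonneg (s k)
    nlinarith
  have hx : x = ∑ k, ⟪b k, Ri x⟫_ℂ • R (b k) := by
    have h1 := congrArg R (b.sum_repr' (Ri x))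
    rw [md.r_ri, map_sum] at h1
    simpa only [map_smul] using h1.symm
  have hlim : Tendsto (fun n : ℕ => ∑ k, (⟪b k, Ri x⟫_ℂ * (s k : ℂ) ^ n) • R (b k)) atTop
      (𝓝 (∑ k, (⟪b k, Ri x⟫_ℂ * 0) • R (b k))) := by
    refine tendsto_finsetSum _ fun k _ => ?_
    refine Tendsto.smul_const (Tendsto.const_mul _ ?_) _
    apply tendsto_pow_atTop_nhds_zero_of_norm_lt_one
    rw [Complex.norm_real]; exact hs1 k
  simp only [mul_zero, zero_smul, Finset.sum_const_zero] at hlim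
  refine hlim.congr fun n => ?_
  conv_rhs => rw [hx, map_sum]
  refine Finset.sum_congr rfl fun k _ => ?_
  rw [map_smul, hBn, smul_smul]

lemma hasSum_obs (md : ModelData Λ Li R Ri M γ) (x : E) :
    HasSum (fun n : ℕ => ‖⟪γ, Li (((M * Li) ^ n) x)⟫_ℂ‖ ^ 2) (‖x‖ ^ 2) := by
  rw [hasSum_iff_tendsto_nat_of_nonneg (fun n => by positivity)]
  have h1 : ∀ n : ℕ, ∑ k ∈ Finset.range n, ‖⟪γ, Li (((M * Li) ^ k) x)⟫_ℂ‖ ^ 2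
      = ‖x‖ ^ 2 - ‖((M * Li) ^ n) x‖ ^ 2 := by
    intro n
    induction n with
    | zero => simp
    | succ n ih =>
      rw [Finset.sum_range_succ, ih, pow_succ' (M * Li)]
      have := md.contr_b (((M * Li) ^ n) x)
      change _ = _ - ‖(M * Li) (((M * Li) ^ n) x)‖ ^ 2
      linarith
  simp only [h1]
  have h2 := ((md.stable x).norm.pow 2).const_sub (‖x‖ ^ 2)
  simpa using h2

/-- The observability isometry. -/
def obs (md : ModelData Λ Li R Ri M γ) : E →ₗᵢ[ℂ] L2 where
  toFun x := ⟨fun n => ⟪γ, Li (((M * Li) ^ n) x)⟫_ℂ, by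
    apply memℓp_gen
    have h2 : ((2 : ℝ≥0∞).toReal) = ((2 : ℕ) : ℝ) := by norm_num
    rw [h2]
    simp only [Real.rpow_natCast]
    exact (md.hasSum_obs x).summable⟩
  map_add' x y := by
    ext n
    change ⟪γ, Li (((M * Li) ^ n) (x + y))⟫_ℂ = ⟪γ, Li (((M * Li) ^ n) x)⟫_ℂ
      + ⟪γ, Li (((M * Li) ^ n) y)⟫_ℂ
    rw [map_add, map_add, inner_add_right]
  map_smul' a x := by
    ext n
    change ⟪γ, Li (((M * Li) ^ n) (a • x))⟫_ℂ = a * ⟪γ, Li (((M * Li) ^ n) x)⟫_ℂ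
    rw [map_smul, map_smul, inner_smul_right]
  norm_map' x := by
    have h1 := md.hasSum_obs x
    have h2 := (hasSum_norm_sq (⟨fun n => ⟪γ, Li (((M * Li) ^ n) x)⟫_ℂ, by
      apply memℓp_gen
      have h2 : ((2 : ℝ≥0∞).toReal) = ((2 : ℕ) : ℝ) := by norm_num
      rw [h2]
      simp only [Real.rpow_natCast]
      exact (md.hasSum_obs x).summable⟩ : L2)).unique h1
    exact (sq_eq_sq₀ (norm_nonneg _) (norm_nonneg _)).1 h2

lemma obs_apply (md : ModelData Λ Li R Ri M γ) (x : E) (n : ℕ) :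
    (md.obs x : ℕ → ℂ) n = ⟪γ, Li (((M * Li) ^ n) x)⟫_ℂ := rfl

/-- The observability isometry, as a continuous linear map. -/
def obsC (md : ModelData Λ Li R Ri M γ) : E →L[ℂ] L2 := md.obs.toContinuousLinearMap

lemma obsC_apply (md : ModelData Λ Li R Ri M γ) (x : E) : md.obsC x = md.obs x := rfl

lemma adj_obs (md : ModelData Λ Li R Ri M γ) (x : E) :
    ContinuousLinearMap.adjoint md.obsC (md.obs x) = x := by
  refine ext_inner_left ℂ fun y => ?_
  rw [ContinuousLinearMap.adjoint_inner_right, obsC_apply, LinearIsometry.inner_map_map]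

lemma u_inner (md : ModelData Λ Li R Ri M γ) (n : ℕ) (x : E) :
    ⟪((Li * M) ^ n) (Li γ), x⟫_ℂ = ⟪γ, Li (((M * Li) ^ n) x)⟫_ℂ := by
  induction n generalizing x with
  | zero => exact md.li_symm _ _
  | succ n ih =>
    rw [pow_succ', pow_succ]
    change ⟪Li (M (((Li * M) ^ n) (Li γ))), x⟫_ℂ = ⟪γ, Li (((M * Li) ^ n) (M (Li x)))⟫_ℂ
    rw [md.li_symm, md.m_symm, ih]

lemma lam_u (md : ModelData Λ Li R Ri M γ) (n : ℕ) :
    Λ (((Li * M) ^ n) (Li γ)) = ((M * Li) ^ n) γ := by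
  induction n with
  | zero => exact md.lam_li _
  | succ n ih =>
    rw [pow_succ', pow_succ']
    change Λ (Li (M (((Li * M) ^ n) (Li γ)))) = M (Li (((M * Li) ^ n) γ))
    rw [md.lam_li, ← ih, md.li_lam]

lemma adj_eb (md : ModelData Λ Li R Ri M γ) (n : ℕ) :
    ContinuousLinearMap.adjoint md.obsC (eb n) = ((Li * M) ^ n) (Li γ) := by
  refine ext_inner_right ℂ fun x => ?_
  rw [ContinuousLinearMap.adjoint_inner_left, inner_eb, md.u_inner]
  rfl

/-- The symbol. -/
def sym (_ : ModelData Λ Li R Ri M γ) (n : ℕ) : ℂ := ⟪γ, Li (((M * Li) ^ n) γ)⟫_ℂ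

lemma sym_real (md : ModelData Λ Li R Ri M γ) (n : ℕ) : conj (md.sym n) = md.sym n := by
  unfold sym
  rw [inner_conj_symm, md.li_symm]
  nth_rewrite 1 [← md.lam_u]
  rw [md.lam_symm, md.lam_li, md.u_inner]

/-- Compression of an operator of the model to `ℓ²`. -/
def lift (md : ModelData Λ Li R Ri M γ) (D : E →L[ℂ] E) : L2 →L[ℂ] L2 :=
  md.obsC ∘L D ∘L ContinuousLinearMap.adjoint md.obsC

lemma lift_apply (md : ModelData Λ Li R Ri M γ) (D : E →L[ℂ] E) (x : L2) :
    md.lift D x = md.obs (D (ContinuousLinearMap.adjoint md.obsC x)) := rfl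

lemma lift_symm (md : ModelData Λ Li R Ri M γ) (D : E →L[ℂ] E)
    (hD : ∀ x y, ⟪D x, y⟫_ℂ = ⟪x, D y⟫_ℂ) (x y : L2) : ⟪md.lift D x, y⟫_ℂ = ⟪x, md.lift D y⟫_ℂ := by
  rw [lift_apply, lift_apply, ← obsC_apply, ← obsC_apply,
    ← ContinuousLinearMap.adjoint_inner_right, hD, ContinuousLinearMap.adjoint_inner_left]

lemma lift_adj (md : ModelData Λ Li R Ri M γ) (D : E →L[ℂ] E)
    (hD : ∀ x y, ⟪D x, y⟫_ℂ = ⟪x, D y⟫_ℂ) (x : L2) :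
    ContinuousLinearMap.adjoint (md.lift D) x = md.lift D x := by
  refine ext_inner_left ℂ fun y => ?_
  rw [ContinuousLinearMap.adjoint_inner_right, md.lift_symm D hD]

lemma lift_hankel (md : ModelData Λ Li R Ri M γ) (D : E →L[ℂ] E)
    (hD : ∀ x y, ⟪D x, y⟫_ℂ = ⟪x, D y⟫_ℂ) (m : ℕ)
    (hm : ∀ n, D (((Li * M) ^ n) (Li γ)) = ((M * Li) ^ (n + m)) γ) :
    IsHankelOp (fun n => md.sym (n + m)) (md.lift D) := by
  intro x n
  rw [← inner_eb, ← md.lift_symm D hD, lift_apply, adj_eb, hm]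
  rw [← (lp.hasSum_inner (𝕜 := ℂ) (md.obs (((M * Li) ^ (n + m)) γ)) x).tsum_eq]
  refine tsum_congr fun p => ?_
  have : (md.obs (((M * Li) ^ (n + m)) γ) : ℕ → ℂ) p = md.sym (n + p + m) := by
    rw [obs_apply, sym, show n + p + m = p + (n + m) by ring, pow_add _ p]
    rfl
  rw [this, RCLike.inner_apply, sym_real, mul_comm]

lemma lift_simple (md : ModelData Λ Li R Ri M γ) (D : E →L[ℂ] E)
    (hD : ∀ x y, ⟪D x, y⟫_ℂ = ⟪x, D y⟫_ℂ) {N : ℕ} (hN : Module.finrank ℂ E = N)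
    (t : Fin N → ℝ) (htinj : Function.Injective t) (htpos : ∀ j, 0 < t j) (v : Fin N → E)
    (hv0 : ∀ j, v j ≠ 0) (hv : ∀ j, D (D (v j)) = (t j : ℂ) • v j) :
    HasSimpleSVals (md.lift D) N (fun j => Real.sqrt (t j)) := by
  have hinj : Function.Injective md.obs.toLinearMap := md.obs.injective
  refine simple_of (LinearMap.range md.obs.toLinearMap)
    ((LinearMap.finrank_range_of_inj hinj).trans hN) ?_ t htinj htpos
    (fun j => md.obs (v j)) (fun j => ⟨v j, rfl⟩) ?_ ?_
  · intro x hx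
    have h0 : ContinuousLinearMap.adjoint md.obsC x = 0 := by
      refine ext_inner_left ℂ fun y => ?_
      rw [ContinuousLinearMap.adjoint_inner_right, inner_zero_right]
      exact hx _ ⟨y, rfl⟩
    rw [md.lift_adj D hD, lift_apply, h0, map_zero, map_zero]
  · intro j h0
    exact hv0 j (md.obs.injective (h0.trans (map_zero _).symm))
  · intro j
    rw [opT_apply, md.lift_adj D hD, lift_apply, lift_apply, adj_obs, adj_obs, hv, map_smul]

lemma lift_HS (md : ModelData Λ Li R Ri M γ) (D : E →L[ℂ] E) :
    Summable fun n => ‖md.lift D (eb n)‖ ^ 2 := by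
  let b := stdOrthonormalBasis ℂ E
  have h1 : ∀ n, ‖ContinuousLinearMap.adjoint md.obsC (eb n)‖ ^ 2
      = ∑ k, ‖(md.obs (b k) : ℕ → ℂ) n‖ ^ 2 := by
    intro n
    rw [← b.sum_sq_norm_inner_left]
    refine Finset.sum_congr rfl fun k _ => ?_
    rw [ContinuousLinearMap.adjoint_inner_left, inner_eb]
    rfl
  have h2 : Summable fun n => ‖D‖ ^ 2 * ‖ContinuousLinearMap.adjoint md.obsC (eb n)‖ ^ 2 := by
    simp only [h1]
    exact (summable_sum fun k _ => (hasSum_norm_sq (md.obs (b k))).summable).mul_left _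
  refine Summable.of_nonneg_of_le (fun n => by positivity) (fun n => ?_) h2
  rw [lift_apply, LinearIsometry.norm_map, ← mul_pow]
  gcongr
  exact D.le_opNorm _

lemma exists_torus (md : ModelData Λ Li R Ri M γ) {N : ℕ} (hN : Module.finrank ℂ E = N)
    {i l : Fin N → ℝ} (hi : Function.Injective i) (hl : Function.Injective l)
    (hi0 : ∀ j, 0 < i j) (hl0 : ∀ j, 0 < l j) (f g : Fin N → E) (hf0 : ∀ j, f j ≠ 0)
    (hg0 : ∀ j, g j ≠ 0) (hf : ∀ j, Λ (Λ (f j)) = (i j : ℂ) • f j)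
    (hg : ∀ j, M (M (g j)) = (l j : ℂ) • g j) :
    ∃ (c : ℕ → ℂ) (Γ Γt : L2 →L[ℂ] L2), InH12 c ∧ IsHankelOp c Γ ∧ IsHankelOp (shiftSeq c) Γt ∧
      HasSimpleSVals Γ N (fun j => Real.sqrt (i j)) ∧
      HasSimpleSVals Γt N (fun j => Real.sqrt (l j)) := by
  have h1 : IsHankelOp md.sym (md.lift Λ) := md.lift_hankel Λ md.lam_symm 0 md.lam_u
  have h2 : IsHankelOp (shiftSeq md.sym) (md.lift M) := by
    refine md.lift_hankel M md.m_symm 1 fun n => ?_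
    have := md.lam_u n
    rw [pow_succ']
    change _ = M (Li (((M * Li) ^ n) γ))
    rw [← this, md.li_lam]
  exact ⟨md.sym, md.lift Λ, md.lift M, inH12_of_HS h1 (md.lift_HS Λ), h1, h2,
    md.lift_simple Λ md.lam_symm hN i hi hi0 f hf0 hf,
    md.lift_simple M md.m_symm hN l hl hl0 g hg0 hg⟩

end ModelData

end PartG

/-! ### Part H: the concrete model -/

section PartH

variable {N : ℕ} {E : Type*} [NormedAddCommGroup E] [InnerProductSpace ℂ E]
  [FiniteDimensional ℂ E]

/-- The operator which is diagonal in a given orthonormal basis. -/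
def diagOp (b : OrthonormalBasis (Fin N) ℂ E) (d : Fin N → ℝ) : E →L[ℂ] E :=
  LinearMap.toContinuousLinearMap (b.toBasis.constr ℂ fun k => (d k : ℂ) • b k)

lemma diagOp_basis (b : OrthonormalBasis (Fin N) ℂ E) (d : Fin N → ℝ) (k : Fin N) :
    diagOp b d (b k) = (d k : ℂ) • b k := by
  have := b.toBasis.constr_basis ℂ (fun k => (d k : ℂ) • b k) k
  simpa [diagOp] using this

lemma onb_expand (b : OrthonormalBasis (Fin N) ℂ E) (x : E) : x = ∑ k, ⟪b k, x⟫_ℂ • b k :=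
  (b.sum_repr' x).symm

lemma op_ext (b : OrthonormalBasis (Fin N) ℂ E) (S T : E →L[ℂ] E) (h : ∀ k, S (b k) = T (b k))
    (x : E) : S x = T x := by
  rw [onb_expand b x, map_sum, map_sum]
  exact Finset.sum_congr rfl fun k _ => by rw [map_smul, map_smul, h]

lemma diagOp_inner (b : OrthonormalBasis (Fin N) ℂ E) (d : Fin N → ℝ) (k : Fin N) (x : E) :
    ⟪b k, diagOp b d x⟫_ℂ = (d k : ℂ) * ⟪b k, x⟫_ℂ := by
  conv_lhs => rw [onb_expand b x, map_sum, inner_sum]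
  rw [Finset.sum_eq_single k]
  · rw [map_smul, diagOp_basis, inner_smul_right, inner_smul_right, inner_self_eq_norm_sq_to_K,
      b.orthonormal.1 k]
    simp [mul_comm]
  · intro j _ hj
    rw [map_smul, diagOp_basis, inner_smul_right, inner_smul_right, b.orthonormal.2 hj.symm]
    simp
  · simp

lemma diagOp_symm (b : OrthonormalBasis (Fin N) ℂ E) (d : Fin N → ℝ) (x y : E) :
    ⟪diagOp b d x, y⟫_ℂ = ⟪x, diagOp b d y⟫_ℂ := by
  rw [← b.sum_inner_mul_inner, ← b.sum_inner_mul_inner]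
  refine Finset.sum_congr rfl fun k _ => ?_
  rw [diagOp_inner, ← inner_conj_symm _ (b k), diagOp_inner, map_mul, Complex.conj_ofReal,
    inner_conj_symm]
  ring

lemma diagOp_mul (b : OrthonormalBasis (Fin N) ℂ E) (d d' d'' : Fin N → ℝ)
    (h : ∀ k, d k * d' k = d'' k) (x : E) : diagOp b d (diagOp b d' x) = diagOp b d'' x := by
  refine op_ext b (diagOp b d ∘L diagOp b d') _ (fun k => ?_) x
  rw [ContinuousLinearMap.comp_apply, diagOp_basis, map_smul, diagOp_basis, diagOp_basis, smul_smul,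
    ← h]
  push_cast
  rw [mul_comm]

lemma diagOp_one (b : OrthonormalBasis (Fin N) ℂ E) (x : E) : diagOp b (fun _ => 1) x = x := by
  refine op_ext b (diagOp b fun _ => 1) (ContinuousLinearMap.id ℂ E) (fun k => ?_) x
  rw [diagOp_basis]; simp

lemma diagOp_pow_inner (b : OrthonormalBasis (Fin N) ℂ E) (d : Fin N → ℝ) (k : Fin N) (n : ℕ)
    (x : E) : ⟪b k, (diagOp b d ^ n) x⟫_ℂ = (d k : ℂ) ^ n * ⟪b k, x⟫_ℂ := by
  induction n with
  | zero => simp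
  | succ n ih =>
    rw [pow_succ']
    change ⟪b k, diagOp b d ((diagOp b d ^ n) x)⟫_ℂ = _
    rw [diagOp_inner, ih, pow_succ]
    ring

lemma exists_point {i l w : Fin N → ℝ} (sd : SpecData N i l w) :
    ∃ (c : ℕ → ℂ) (Γ Γt : L2 →L[ℂ] L2), InH12 c ∧ IsHankelOp c Γ ∧ IsHankelOp (shiftSeq c) Γt ∧
      HasSimpleSVals Γ N (fun j => Real.sqrt (i j)) ∧
      HasSimpleSVals Γt N (fun j => Real.sqrt (l j)) := by
  let e : OrthonormalBasis (Fin N) ℂ (EuclideanSpace ℂ (Fin N)) := EuclideanSpace.basisFun _ ℂ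
  have hdim : Module.finrank ℂ (EuclideanSpace ℂ (Fin N)) = N := by simp
  let a : Fin N → ℝ := fun j => Real.sqrt (i j * w j)
  have hapos : ∀ j, 0 < a j := fun j => Real.sqrt_pos.2 (mul_pos (sd.i_pos j) (sd.w_pos j))
  have hasq : ∀ j, a j * a j = i j * w j := fun j =>
    Real.mul_self_sqrt (mul_pos (sd.i_pos j) (sd.w_pos j)).le
  let γ : EuclideanSpace ℂ (Fin N) := ∑ j, (a j : ℂ) • e j
  have hγ : ∀ x, ⟪γ, x⟫_ℂ = ∑ j, (a j : ℂ) * ⟪e j, x⟫_ℂ := by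
    intro x
    rw [sum_inner]
    exact Finset.sum_congr rfl fun j _ => by rw [inner_smul_left, Complex.conj_ofReal]
  have hil : ∀ j k, (i j : ℂ) - l k ≠ 0 := fun j k =>
    sub_ne_zero.2 fun h => sd.i_ne_l j k (Complex.ofReal_injective h)
  let v : Fin N → EuclideanSpace ℂ (Fin N) := fun k => ∑ j, ((a j : ℂ) / ((i j : ℂ) - l k)) • e j
  have hev : ∀ j k, ⟪e j, v k⟫_ℂ = (a j : ℂ) / ((i j : ℂ) - l k) := fun j k =>
    e.orthonormal.inner_right_fintype _ j
  have hγv : ∀ k, ⟪γ, v k⟫_ℂ = 1 := by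
    intro k
    rw [hγ]
    have h2 : ((∑ j, i j * w j / (i j - l k) : ℝ) : ℂ) = 1 := by rw [sd.cauchy k]; simp
    rw [← h2, Complex.ofReal_sum]
    refine Finset.sum_congr rfl fun j _ => ?_
    rw [hev, ← hasq]
    push_cast
    ring
  have hv0 : ∀ k, v k ≠ 0 := by
    intro k h0
    have := hγv k
    rw [h0, inner_zero_right] at this
    exact zero_ne_one this
  let I2 := diagOp e i
  have hI2 : ∀ k, I2 (v k) - ⟪γ, v k⟫_ℂ • γ = (l k : ℂ) • v k := by
    intro k
    rw [hγv, one_smul]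
    simp only [v, γ, I2, map_sum, map_smul, diagOp_basis, Finset.smul_sum,
      ← Finset.sum_sub_distrib, smul_smul, ← sub_smul]
    refine Finset.sum_congr rfl fun j _ => ?_
    congr 1
    have := hil j k
    field_simp
    ring
  have hort : ∀ k m, k ≠ m → ⟪v k, v m⟫_ℂ = 0 := by
    intro k m hkm
    have h1 : ⟪(l k : ℂ) • v k, v m⟫_ℂ = ⟪v k, (l m : ℂ) • v m⟫_ℂ := by
      rw [← hI2, ← hI2, inner_sub_left, inner_sub_right, diagOp_symm, inner_smul_left,
        inner_smul_right, inner_conj_symm]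
      ring
    rw [inner_smul_left, inner_smul_right, Complex.conj_ofReal] at h1
    have h2 : ((l k : ℂ) - l m) * ⟪v k, v m⟫_ℂ = 0 := by linear_combination h1
    refine (mul_eq_zero.1 h2).resolve_left (sub_ne_zero.2 fun h => hkm ?_)
    exact sd.l_inj (Complex.ofReal_injective h)
  let g0 : Fin N → EuclideanSpace ℂ (Fin N) := fun k => ((‖v k‖⁻¹ : ℝ) : ℂ) • v k
  have hg0 : Orthonormal ℂ g0 := by
    refine ⟨fun k => ?_, fun k m hkm => ?_⟩
    · rw [norm_smul, Complex.norm_real, norm_inv, norm_norm,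
        inv_mul_cancel₀ (norm_ne_zero_iff.2 (hv0 k))]
    · change ⟪((‖v k‖⁻¹ : ℝ) : ℂ) • v k, ((‖v m‖⁻¹ : ℝ) : ℂ) • v m⟫_ℂ = 0
      rw [inner_smul_left, inner_smul_right, hort k m hkm]; simp
  let g : OrthonormalBasis (Fin N) ℂ (EuclideanSpace ℂ (Fin N)) := OrthonormalBasis.mk hg0 (by
    rw [hg0.linearIndependent.span_eq_top_of_card_eq_finrank' (by simp)])
  have hg : ∀ k, g k = ((‖v k‖⁻¹ : ℝ) : ℂ) • v k := fun k => by
    simp only [g, OrthonormalBasis.coe_mk, g0]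
  have hil2 : ∀ k, I2 (g k) - ⟪γ, g k⟫_ℂ • γ = (l k : ℂ) • g k := by
    intro k
    rw [hg, map_smul, inner_smul_right, ← smul_smul, ← smul_sub, hI2, smul_comm]
  let r : Fin N → ℝ := fun j => Real.sqrt (i j)
  have hr : ∀ j, 0 < r j := fun j => Real.sqrt_pos.2 (sd.i_pos j)
  have hrr : ∀ j, r j * r j = i j := fun j => Real.mul_self_sqrt (sd.i_pos j).le
  let q : Fin N → ℝ := fun j => Real.sqrt (r j)
  have hq : ∀ j, 0 < q j := fun j => Real.sqrt_pos.2 (hr j)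
  have hqq : ∀ j, q j * q j = r j := fun j => Real.mul_self_sqrt (hr j).le
  let s : Fin N → ℝ := fun j => Real.sqrt (l j)
  have hss : ∀ j, s j * s j = l j := fun j => Real.mul_self_sqrt (sd.l_pos j).le
  have md : ModelData (diagOp e r) (diagOp e fun j => (r j)⁻¹) (diagOp e q)
      (diagOp e fun j => (q j)⁻¹) (diagOp g s) γ :=
    { lam_symm := diagOp_symm _ _
      li_symm := diagOp_symm _ _
      ri_symm := diagOp_symm _ _
      m_symm := diagOp_symm _ _
      lam_li := fun x => by
        rw [diagOp_mul e _ _ (fun _ => 1) (fun k => mul_inv_cancel₀ (hr k).ne'), diagOp_one]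
      li_lam := fun x => by
        rw [diagOp_mul e _ _ (fun _ => 1) (fun k => inv_mul_cancel₀ (hr k).ne'), diagOp_one]
      r_r := diagOp_mul e _ _ _ hqq
      r_ri := fun x => by
        rw [diagOp_mul e _ _ (fun _ => 1) (fun k => mul_inv_cancel₀ (hq k).ne'), diagOp_one]
      ri_r := fun x => by
        rw [diagOp_mul e _ _ (fun _ => 1) (fun k => inv_mul_cancel₀ (hq k).ne'), diagOp_one]
      m_sq := fun x => by
        rw [diagOp_mul g _ _ _ hss, diagOp_mul e _ _ _ hrr]
        refine op_ext g (diagOp g l) (I2 - (innerSL ℂ γ).smulRight γ) (fun k => ?_) x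
        rw [diagOp_basis, ← hil2]
        rfl
      cyc := fun z hz => by
        have hz0 : (fun j => (a j : ℂ) * ⟪e j, z⟫_ℂ) = 0 := by
          apply Matrix.eq_zero_of_forall_pow_sum_mul_pow_eq_zero
            (f := fun j => (r j : ℂ))
          · intro j k hjk
            have h1 : r j = r k := Complex.ofReal_injective hjk
            apply sd.i_inj
            rw [← hrr, ← hrr, h1]
          · intro n
            rw [← hz n, hγ]
            refine Finset.sum_congr rfl fun j _ => ?_
            rw [diagOp_pow_inner]
            ring
        rw [onb_expand e z]
        refine Finset.sum_eq_zero fun j _ => ?_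
        have h1 : (a j : ℂ) * ⟪e j, z⟫_ℂ = 0 := congrFun hz0 j
        rw [(mul_eq_zero.1 h1).resolve_left (Complex.ofReal_ne_zero.2 (hapos j).ne'), zero_smul] }
  refine md.exists_torus hdim sd.i_inj sd.l_inj sd.i_pos sd.l_pos e g
    (fun j => e.orthonormal.ne_zero j) (fun j => g.orthonormal.ne_zero j) ?_ ?_
  · intro j
    rw [diagOp_mul e _ _ _ hrr, diagOp_basis]
  · intro j
    rw [diagOp_mul g _ _ _ hss, diagOp_basis]

end PartH

/-- Variational characterization of the invariant torus: with the constraints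
`J_{2n}(c) = j_{2n}`, `n = 1, …, 2N`, the functional `M(c) = Σ n|c_n|²` attains its infimum,
the minimum value is `Σ_m L_m/2`, and the set of minimizers is exactly the torus of those
`c` whose Hankel operators `Γ_c`, `Γ̃_c` have rank `N` with simple positive singular values
`√(I_j/2)` and `√(L_m/2)` respectively. -/
theorem statement12 (N : ℕ) (hN : 1 ≤ N) (I L : Fin N → ℝ)
    (h1 : ∀ j : Fin N, L j < I j)
    (h2 : ∀ j k : Fin N, (j : ℕ) + 1 = (k : ℕ) → I k < L j)
    (h3 : ∀ j : Fin N, 0 < L j) :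
    IsLeast
      ((fun c : ℕ → ℂ => ∑' n : ℕ, (n : ℝ) * ‖c n‖ ^ 2) ''
        {c : ℕ → ℂ | InH12 c ∧ ∃ Γ : L2 →L[ℂ] L2, IsHankelOp c Γ ∧
          ∀ n : ℕ, 1 ≤ n → n ≤ 2 * N →
            ⟪e0, ((opT Γ) ^ n) e0⟫_ℂ =
              ((∑ j : Fin N, (I j / 2) ^ n * (1 - L j / I j) *
                ∏ k ∈ Finset.univ.erase j, (L k - I j) / (I k - I j) : ℝ) : ℂ)})
      (∑ m : Fin N, L m / 2) ∧
    {c : ℕ → ℂ | (InH12 c ∧ ∃ Γ : L2 →L[ℂ] L2, IsHankelOp c Γ ∧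
          ∀ n : ℕ, 1 ≤ n → n ≤ 2 * N →
            ⟪e0, ((opT Γ) ^ n) e0⟫_ℂ =
              ((∑ j : Fin N, (I j / 2) ^ n * (1 - L j / I j) *
                ∏ k ∈ Finset.univ.erase j, (L k - I j) / (I k - I j) : ℝ) : ℂ)) ∧
        (∑' n : ℕ, (n : ℝ) * ‖c n‖ ^ 2) = ∑ m : Fin N, L m / 2}
      = {c : ℕ → ℂ | InH12 c ∧ ∃ Γ Γt : L2 →L[ℂ] L2,
          IsHankelOp c Γ ∧ IsHankelOp (shiftSeq c) Γt ∧
          HasSimpleSVals Γ N (fun j => Real.sqrt (I j / 2)) ∧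
          HasSimpleSVals Γt N (fun j => Real.sqrt (L j / 2))} := by
  have sd := specData_of hN I L h1 h2 h3
  have hform : ∀ n : ℕ, ∑ j : Fin N, (I j / 2) ^ n * (1 - L j / I j) *
      ∏ k ∈ Finset.univ.erase j, (L k - I j) / (I k - I j)
      = ∑ j : Fin N, ((1 - L j / I j) *
        ∏ k ∈ Finset.univ.erase j, (L k - I j) / (I k - I j)) * (I j / 2) ^ n :=
    fun n => Finset.sum_congr rfl fun j _ => by ring
  simp only [hform]
  obtain ⟨c, Γ, Γt, hc, hΓ, hΓt, hs, hst⟩ := exists_point sd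
  obtain ⟨hmom, hM⟩ := simple_moment hN sd hc hΓ hΓt hs hst
  refine ⟨⟨⟨c, ⟨hc, Γ, hΓ, hmom⟩, hM⟩, ?_⟩, ?_⟩
  · rintro _ ⟨d, ⟨hd, Γd, hΓd, hmd⟩, rfl⟩
    exact (min_family hN sd hd hΓd hmd).1
  · ext d
    constructor
    · rintro ⟨⟨hd, Γd, hΓd, hmd⟩, hMd⟩
      obtain ⟨Γe, h4, h5, h6⟩ := minimizer_mem hN sd hd hΓd hmd hMd
      exact ⟨hd, Γd, Γe, hΓd, h4, h5, h6⟩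
    · rintro ⟨hd, Γd, Γe, hΓd, h4, h5, h6⟩
      obtain ⟨hmd, hMd⟩ := simple_moment hN sd hd hΓd h4 h5 h6
      exact ⟨⟨hd, Γd, hΓd, hmd⟩, hMd⟩

end
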